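/- arXiv:1611.10315 — 4 statements merged into one kernel-verified Lean document; each statement's English description precedes it below -/
import Mathlib

section
/- There exists a family F of graphs that contains a bipartite graph, a co-bipartite graph and a split graph, but for which the property P*_F of being induced F-free is not easily testable. -/
open scoped Classical
open Finset

noncomputable section

/-- Number of unordered vertex pairs on which two graphs on the same vertex set differ. -/
def editDist {n : ℕ} (G H : SimpleGraph (Fin n)) : ℕ :=
  Set.ncard {e : Sym2 (Fin n) | (e ∈ G.edgeSet ∧ e ∉ H.edgeSet) ∨ (e ∉ G.edgeSet ∧ e ∈ H.edgeSet)}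

/-- `G` is `ε`-far from satisfying the graph property `P`. -/
def Far (P : ∀ n : ℕ, Set (SimpleGraph (Fin n))) {n : ℕ} (G : SimpleGraph (Fin n)) (ε : ℝ) : Prop :=
  ∀ H : SimpleGraph (Fin n), H ∈ P n → ε * (n : ℝ) ^ 2 ≤ (editDist G H : ℝ)

/-- The subgraph induced by a vertex subset `Q` of size `m`, as a graph on `Fin m`. -/
def inducedOn {n : ℕ} (G : SimpleGraph (Fin n)) {m : ℕ} (Q : Finset (Fin n))
    (h : Q.card = m) : SimpleGraph (Fin m) :=
  G.comap fun i => ((Q.orderIsoOfFin h) i : Fin n)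

/-- A graph property is easily testable if for some constant `c > 0`, for every `ε ∈ (0,1/2)`
and every graph on at least `ε ^ (-c)` vertices which is `ε`-far from `P`, at least a
`2/3`-fraction of the `⌈ε ^ (-c)⌉`-element vertex subsets induce a subgraph not satisfying `P`. -/
def EasilyTestable (P : ∀ n : ℕ, Set (SimpleGraph (Fin n))) : Prop :=
  ∃ c : ℝ, 0 < c ∧ ∀ ε : ℝ, 0 < ε → ε < 1 / 2 → ∀ n : ℕ, ∀ G : SimpleGraph (Fin n),
    ε ^ (-c) ≤ (n : ℝ) → Far P G ε →
    (2 / 3 : ℝ) * (((Finset.univ : Finset (Fin n)).powersetCard ⌈ε ^ (-c)⌉₊).card : ℝ) ≤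
      ((((Finset.univ : Finset (Fin n)).powersetCard ⌈ε ^ (-c)⌉₊).filter
        fun Q => ∃ h : Q.card = ⌈ε ^ (-c)⌉₊, inducedOn G Q h ∉ P ⌈ε ^ (-c)⌉₊).card : ℝ)

/-- The property of being induced `𝓕`-free. -/
def InducedFree (𝓕 : Set (Σ k : ℕ, SimpleGraph (Fin k))) : ∀ n : ℕ, Set (SimpleGraph (Fin n)) :=
  fun n => {G | ∀ p ∈ 𝓕, IsEmpty (p.2 ↪g G)}

/-- A graph is bipartite: its vertex set can be partitioned into two independent sets. -/
def IsBipGraph {V : Type*} (H : SimpleGraph V) : Prop :=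
  ∃ A : Set V, (∀ u ∈ A, ∀ v ∈ A, ¬ H.Adj u v) ∧ (∀ u ∉ A, ∀ v ∉ A, ¬ H.Adj u v)

/-- A graph is co-bipartite: its vertex set can be partitioned into two cliques. -/
def IsCoBipGraph {V : Type*} (H : SimpleGraph V) : Prop :=
  ∃ A : Set V, (∀ u ∈ A, ∀ v ∈ A, u ≠ v → H.Adj u v) ∧ (∀ u ∉ A, ∀ v ∉ A, u ≠ v → H.Adj u v)

/-- A graph is split: its vertex set can be partitioned into a clique and an independent set. -/
def IsSplitGraph {V : Type*} (H : SimpleGraph V) : Prop :=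
  ∃ A : Set V, (∀ u ∈ A, ∀ v ∈ A, u ≠ v → H.Adj u v) ∧ (∀ u ∉ A, ∀ v ∉ A, ¬ H.Adj u v)

/-!
For every odd `m > 1` let `F` contain all graphs on more than `m ^ m` vertices that contain a
homomorphic image of the cycle `C_m`. Blow up each vertex of `C_m` to an independent set of prime
size `q ≥ m ^ m`. Since `𝔽_q` contains `m` distinct abscissae, the `q ^ 2` affine lines over `𝔽_q`
give transversal copies of `C_m`; a line is determined by two of its points, so these copies are
edge-disjoint and destroying all of them takes `q ^ 2` edits. Thus the blow-up, which has `m * q`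
vertices, is `m ^ (-2)`-far from being induced `F`-free. On the other hand it maps homomorphically
to `C_m`, so it contains no image of a shorter odd cycle, and a sample of at most `m ^ m` vertices
is too small to contain one of the graphs attached to `C_m` or to a longer cycle. Letting `m` grow
defeats every polynomial sample size.

For `m > 3` the blow-up also contains neither a triangle, which is both co-bipartite and split, nor
the bipartite half graph on six vertices, in which some vertex has three neighbours with pairwise
distinct neighbourhoods. Hence both graphs can be added to `F`.
-/

theorem not_easilyTestable_of_far_of_inducedOn_mem {P : ∀ n : ℕ, Set (SimpleGraph (Fin n))}
    (h : ∀ c : ℝ, 0 < c → ∃ ε : ℝ, 0 < ε ∧ ε < 1 / 2 ∧ ∃ (n : ℕ) (G : SimpleGraph (Fin n)),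
      ε ^ (-c) ≤ n ∧ Far P G ε ∧
        ∀ (Q : Finset (Fin n)) (hQ : Q.card = ⌈ε ^ (-c)⌉₊), inducedOn G Q hQ ∈ P _) :
    ¬ EasilyTestable P := by
  rintro ⟨c, hc, htest⟩
  obtain ⟨ε, hε, hε2, n, G, hn, hfar, hsample⟩ := h c hc
  have no_rejection := htest ε hε hε2 n G hn hfar
  rw [Finset.filter_false_of_mem fun Q _ ⟨hQ, hQP⟩ => hQP (hsample Q hQ), Finset.card_empty,
    Nat.cast_zero, Finset.card_powersetCard, Finset.card_univ, Fintype.card_fin] at no_rejection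
  have choose_pos : (0 : ℝ) < n.choose ⌈ε ^ (-c)⌉₊ := by
    exact_mod_cast Nat.choose_pos (Nat.ceil_le.mpr hn)
  linarith

theorem inducedOn_mem_inducedFree {𝓕 : Set (Σ k : ℕ, SimpleGraph (Fin k))} {n m : ℕ}
    {G : SimpleGraph (Fin n)} (hG : ∀ p ∈ 𝓕, p.1 ≤ m → IsEmpty (p.2 ↪g G))
    (Q : Finset (Fin n)) (hQ : Q.card = m) : inducedOn G Q hQ ∈ InducedFree 𝓕 m := by
  intro p hp
  refine ⟨fun φ => (hG p hp ?_).false (.comp ?_ φ)⟩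
  · simpa using Fintype.card_le_of_injective φ φ.injective
  · exact .comap ((Q.orderIsoOfFin hQ).toEquiv.toEmbedding.trans (.subtype _)) G

theorem card_le_editDist_of_pairwise_disjoint_edges {n : ℕ} {W ι : Type*} [Fintype ι]
    {F : SimpleGraph W} {G H : SimpleGraph (Fin n)} (f : ι → F →g G)
    (hf : Pairwise fun i j => Disjoint (Sym2.map (f i) '' F.edgeSet) (Sym2.map (f j) '' F.edgeSet))
    (hH : IsEmpty (F →g H)) : Fintype.card ι ≤ editDist G H := by
  have exists_deleted_edge (i : ι) : ∃ e ∈ F.edgeSet, Sym2.map (f i) e ∉ H.edgeSet := by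
    by_contra! h
    exact hH.false ⟨f i, fun {u v} huv => h s(u, v) huv⟩
  choose e heF heH using exists_deleted_edge
  have deleted_injective : Function.Injective fun i => Sym2.map (f i) (e i) := by
    intro i j hij
    by_contra hne
    exact Set.disjoint_left.mp (hf hne) ⟨e i, heF i, hij⟩ ⟨e j, heF j, rfl⟩
  calc Fintype.card ι = (Set.range fun i => Sym2.map (f i) (e i)).ncard := by
        rw [← Set.image_univ, Set.ncard_image_of_injective _ deleted_injective, Set.ncard_univ,
          Nat.card_eq_fintype_card]
    _ ≤ editDist G H := by
        refine Set.ncard_le_ncard ?_ (Set.toFinite _)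
        rintro _ ⟨i, rfl⟩
        exact Or.inl ⟨(f i).map_mem_edgeSet (heF i), heH i⟩

/-- The copy of `F` given by the line with intercept `p.1` and slope `p.2`, inside the blow-up of
`F` that replaces each vertex by an independent set indexed by the field `K`. The vertices of the
blow-up are coordinatized by `e`, and those of `F` serve as abscissae through `a`. -/
def lineCopy {V W K : Type*} [Field K] (F : SimpleGraph W) (a : W ↪ K) (e : V ≃ W × K) (p : K × K) :
    F →g F.comap fun v => (e v).1 where
  toFun w := e.symm (w, p.1 + a w * p.2)
  map_rel' h := by simpa using h

section LineCopy

variable {V W K : Type*} [Field K] {F : SimpleGraph W} {a : W ↪ K} {e : V ≃ W × K}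

theorem fst_lineCopy (p : K × K) (w : W) : (e (lineCopy F a e p w)).1 = w := by
  simp [lineCopy]

theorem snd_lineCopy (p : K × K) (w : W) : (e (lineCopy F a e p w)).2 = p.1 + a w * p.2 := by
  simp [lineCopy]

theorem eq_of_lineCopy_eq {p q : K × K} {u v : W} (huv : u ≠ v)
    (hu : lineCopy F a e p u = lineCopy F a e q u)
    (hv : lineCopy F a e p v = lineCopy F a e q v) : p = q := by
  have hu' : p.1 + a u * p.2 = q.1 + a u * q.2 := by rw [← snd_lineCopy, hu, snd_lineCopy]
  have hv' : p.1 + a v * p.2 = q.1 + a v * q.2 := by rw [← snd_lineCopy, hv, snd_lineCopy]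
  have hslope : p.2 = q.2 := by
    refine mul_left_cancel₀ (sub_ne_zero.mpr (a.injective.ne huv)) ?_
    linear_combination hu' - hv'
  rw [hslope] at hu'
  exact Prod.ext (add_right_cancel hu') hslope

variable (F a e) in
theorem pairwise_disjoint_lineCopy_edges :
    Pairwise fun p q => Disjoint (Sym2.map (lineCopy F a e p) '' F.edgeSet)
      (Sym2.map (lineCopy F a e q) '' F.edgeSet) := by
  intro p q hpq
  rw [Set.disjoint_left]
  rintro _ ⟨⟨u, v⟩, huv, rfl⟩ ⟨⟨u', v'⟩, -, h⟩
  have hne : u ≠ v := F.ne_of_adj huv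
  have eq_of_lineCopy_eq_lineCopy {x y : W} (hxy : lineCopy F a e q x = lineCopy F a e p y) :
      x = y := by
    rw [← fst_lineCopy q x, hxy, fst_lineCopy]
  rcases Sym2.eq_iff.mp h with ⟨hu, hv⟩ | ⟨hu, hv⟩ <;>
    obtain rfl := eq_of_lineCopy_eq_lineCopy hu <;>
    obtain rfl := eq_of_lineCopy_eq_lineCopy hv
  · exact hpq (eq_of_lineCopy_eq hne hu hv).symm
  · exact hpq (eq_of_lineCopy_eq hne hv hu).symm

end LineCopy

theorem far_blowup_of_isEmpty_hom {W K : Type*} [Fintype W] [Field K] [Finite K] {n : ℕ}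
    (F : SimpleGraph W) (a : W ↪ K) (e : Fin n ≃ W × K) {P : ∀ n : ℕ, Set (SimpleGraph (Fin n))}
    (hP : ∀ H ∈ P n, IsEmpty (F →g H)) :
    Far P (F.comap fun v => (e v).1) ((Fintype.card W : ℝ) ^ 2)⁻¹ := by
  intro H hH
  have := Fintype.ofFinite K
  have hn : n = Fintype.card W * Fintype.card K := by
    rw [← Fintype.card_prod, ← Fintype.card_congr e, Fintype.card_fin]
  calc ((Fintype.card W : ℝ) ^ 2)⁻¹ * (n : ℝ) ^ 2
      = ((Fintype.card W : ℝ) ^ 2)⁻¹ * (Fintype.card W : ℝ) ^ 2 * (Fintype.card K : ℝ) ^ 2 := by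
        rw [hn, Nat.cast_mul, mul_pow, mul_assoc]
    _ ≤ (Fintype.card K : ℝ) ^ 2 := mul_le_of_le_one_left (sq_nonneg _) inv_mul_le_one
    _ = (Fintype.card (K × K) : ℝ) := by rw [Fintype.card_prod, Nat.cast_mul, sq]
    _ ≤ editDist (F.comap fun v => (e v).1) H := by
        exact_mod_cast card_le_editDist_of_pairwise_disjoint_edges (lineCopy F a e)
          (pairwise_disjoint_lineCopy_edges F a e) (hP H hH)

theorem val_sub_mod_two_ne_of_cycleGraph_adj {m : ℕ} {u v w : Fin m}
    (huv : (SimpleGraph.cycleGraph m).Adj u v) (hu : u ≠ w) (hv : v ≠ w) :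
    (u - w).val % 2 ≠ (v - w).val % 2 := by
  have val_sub (x y : Fin m) : (x - y).val = if y ≤ x then x.val - y else m + x - y := by
    split_ifs with h
    · exact Fin.sub_val_of_le h
    · exact Fin.coe_sub_iff_lt.mpr (not_le.mp h)
  rw [SimpleGraph.cycleGraph_adj'] at huv
  simp only [val_sub, Fin.le_def, ne_eq, Fin.ext_iff] at *
  split_ifs at * <;> omega

-- The homomorphism misses a vertex, and a cycle minus a vertex is a path.
theorem colorable_two_of_hom_cycleGraph {W : Type*} [Fintype W] {F : SimpleGraph W} {m : ℕ}
    (f : F →g SimpleGraph.cycleGraph m) (h : Fintype.card W < m) : F.Colorable 2 := by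
  obtain ⟨w, hw⟩ : ∃ w, ∀ x, f x ≠ w := by
    by_contra! hsurj
    simpa using (Fintype.card_le_of_surjective f hsurj).trans_lt h
  exact ⟨.mk (fun x => (⟨(f x - w).val % 2, Nat.mod_lt _ two_pos⟩ : Fin 2)) fun huv heq =>
    val_sub_mod_two_ne_of_cycleGraph_adj (f.map_adj huv) (hw _) (hw _) (Fin.val_eq_of_eq heq)⟩

theorem isEmpty_hom_cycleGraph_of_odd {j m : ℕ} (hj : Odd j) (hj1 : 1 < j) (hjm : j < m) :
    IsEmpty (SimpleGraph.cycleGraph j →g SimpleGraph.cycleGraph m) := by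
  refine ⟨fun f => ?_⟩
  have h2 := (colorable_two_of_hom_cycleGraph f (by simpa using hjm)).chromaticNumber_le
  rw [SimpleGraph.chromaticNumber_cycleGraph_of_odd j hj1 hj] at h2
  exact absurd h2 (by norm_num)

theorem encard_neighborSet_cycleGraph_le {m : ℕ} (x : Fin m) :
    ((SimpleGraph.cycleGraph m).neighborSet x).encard ≤ 2 := by
  match m with
  | 1 => simp [SimpleGraph.cycleGraph_one_eq_bot]
  | m + 2 =>
    rw [SimpleGraph.cycleGraph_neighborSet]
    exact (Set.encard_insert_le _ _).trans (by norm_num)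

/-- The half graph on `n` vertices: its two sides are the even and the odd vertices, and an even
vertex is joined to the odd vertices above it. Listing the sides alternately keeps the vertex set
of the form `Fin n`. -/
def halfGraph (n : ℕ) : SimpleGraph (Fin n) :=
  SimpleGraph.fromRel fun u v => Even u.val ∧ Odd v.val ∧ u < v

theorem isBipGraph_halfGraph (n : ℕ) : IsBipGraph (halfGraph n) := by
  refine ⟨{u | Even u.val}, ?_, ?_⟩ <;> intro u hu v hv <;>
  grind [halfGraph, SimpleGraph.fromRel_adj]

theorem halfGraph_adj_even_odd {n i j : ℕ} (hi : 2 * i < n) (hj : 2 * j + 1 < n) :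
    (halfGraph n).Adj ⟨2 * i, hi⟩ ⟨2 * j + 1, hj⟩ ↔ i ≤ j := by
  grind [halfGraph, SimpleGraph.fromRel_adj]

theorem exists_le_encard_neighborSet_of_halfGraph_embedding {V W : Type*} {k : ℕ} (hk : 0 < k)
    {C : SimpleGraph W} {π : V → W} (φ : halfGraph (2 * k) ↪g C.comap π) :
    ∃ x, (k : ℕ∞) ≤ (C.neighborSet x).encard := by
  let even (i : Fin k) : W := π (φ ⟨2 * i, by omega⟩)
  let odd (j : Fin k) : W := π (φ ⟨2 * j + 1, by omega⟩)
  have adj_iff (i j : Fin k) : C.Adj (even i) (odd j) ↔ i ≤ j := by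
    rw [Fin.le_def, ← halfGraph_adj_even_odd, ← φ.map_adj_iff, SimpleGraph.comap_adj]
  have even_injective : Function.Injective even := fun i j hij =>
    le_antisymm ((adj_iff i j).mp (hij ▸ (adj_iff j j).mpr le_rfl))
      ((adj_iff j i).mp (hij ▸ (adj_iff i i).mpr le_rfl))
  let last : Fin k := ⟨k - 1, by omega⟩
  have range_even_subset : Set.range even ⊆ C.neighborSet (odd last) := by
    rintro _ ⟨i, rfl⟩
    exact ((adj_iff i last).mpr (Nat.le_sub_one_of_lt i.isLt)).symm
  refine ⟨odd last, ?_⟩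
  calc (k : ℕ∞) = (Set.range even).encard := by
        rw [← Set.image_univ, even_injective.encard_image]
        simp
    _ ≤ (C.neighborSet (odd last)).encard := Set.encard_le_encard range_even_subset

theorem isCoBipGraph_top (V : Type*) : IsCoBipGraph (⊤ : SimpleGraph V) :=
  ⟨Set.univ, fun _ _ _ _ h => h, fun _ hu => absurd (Set.mem_univ _) hu⟩

theorem isSplitGraph_top (V : Type*) : IsSplitGraph (⊤ : SimpleGraph V) :=
  ⟨Set.univ, fun _ _ _ _ h => h, fun _ hu => absurd (Set.mem_univ _) hu⟩

/-- The triangle, the half graph on six vertices, and, for each odd `j > 1`, all graphs on more than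
`j ^ j` vertices that contain a homomorphic image of the cycle `C_j`. The size requirement hides
these last graphs from every tester whose sample has at most `j ^ j` vertices. -/
def oddCycleFamily : Set (Σ k : ℕ, SimpleGraph (Fin k)) :=
  {⟨3, ⊤⟩, ⟨6, halfGraph 6⟩} ∪
    {p | ∃ j, Odd j ∧ 1 < j ∧ j ^ j < p.1 ∧ Nonempty (SimpleGraph.cycleGraph j →g p.2)}

theorem isEmpty_hom_of_mem_inducedFree_oddCycleFamily {m n : ℕ} (hm : Odd m) (hm1 : 1 < m)
    (hn : m ^ m < n) {H : SimpleGraph (Fin n)} (hH : H ∈ InducedFree oddCycleFamily n) :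
    IsEmpty (SimpleGraph.cycleGraph m →g H) :=
  ⟨fun f => (hH ⟨n, H⟩ (Or.inr ⟨m, hm, hm1, hn, ⟨f⟩⟩)).false .refl⟩

theorem isEmpty_embedding_cycleGraph_blowup {V : Type*} {m : ℕ} (hm : 3 < m) (π : V → Fin m)
    {p : Σ k : ℕ, SimpleGraph (Fin k)} (hp : p ∈ oddCycleFamily) (hpm : p.1 ≤ m ^ m) :
    IsEmpty (p.2 ↪g (SimpleGraph.cycleGraph m).comap π) := by
  refine ⟨fun φ => ?_⟩
  have hom : p.2 →g SimpleGraph.cycleGraph m := (SimpleGraph.Hom.comap π _).comp φ.toHom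
  rcases hp with (rfl | rfl) | ⟨j, hj, hj1, hjp, ⟨f⟩⟩
  · rw [← SimpleGraph.cycleGraph_three_eq_top] at hom
    exact (isEmpty_hom_cycleGraph_of_odd (by decide) (by norm_num) hm).false hom
  · obtain ⟨x, hx⟩ :=
      exists_le_encard_neighborSet_of_halfGraph_embedding (k := 3) (by norm_num) φ
    exact absurd (hx.trans (encard_neighborSet_cycleGraph_le x)) (by norm_num)
  · have hjm : j < m := Nat.pow_self_mono.reflect_lt (hjp.trans_le hpm)
    exact (isEmpty_hom_cycleGraph_of_odd hj hj1 hjm).false (hom.comp f)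

theorem inv_sq_rpow_neg_le {c : ℝ} {m : ℕ} (hm : 0 < m) (hcm : 2 * c ≤ m) :
    (((m : ℝ) ^ 2)⁻¹) ^ (-c) ≤ (m : ℝ) ^ m := by
  have hm1 : (1 : ℝ) ≤ m := by exact_mod_cast hm
  calc (((m : ℝ) ^ 2)⁻¹) ^ (-c) = (m : ℝ) ^ (2 * c) := by
        rw [Real.rpow_neg_eq_inv_rpow, inv_inv, ← Real.rpow_natCast_mul (by positivity),
          Nat.cast_two]
    _ ≤ (m : ℝ) ^ (m : ℝ) := Real.rpow_le_rpow_of_exponent_le hm1 hcm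
    _ = (m : ℝ) ^ m := Real.rpow_natCast _ _

theorem not_easilyTestable_oddCycleFamily : ¬ EasilyTestable (InducedFree oddCycleFamily) := by
  refine not_easilyTestable_of_far_of_inducedOn_mem fun c _ => ?_
  obtain ⟨m, hodd, hm3, hcm⟩ : ∃ m : ℕ, Odd m ∧ 3 < m ∧ 2 * c ≤ m := by
    refine ⟨2 * ⌈c⌉₊ + 5, ⟨⌈c⌉₊ + 2, by ring⟩, by omega, ?_⟩
    push_cast
    linarith [Nat.le_ceil c]
  obtain ⟨q, hmq, hq⟩ := Nat.exists_infinite_primes (m ^ m)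
  have : Fact q.Prime := ⟨hq⟩
  obtain ⟨a⟩ : Nonempty (Fin m ↪ ZMod q) := Function.Embedding.nonempty_of_card_le <| by
    simpa [ZMod.card] using (Nat.le_self_pow (by omega) m).trans hmq
  obtain ⟨e⟩ : Nonempty (Fin (m * q) ≃ Fin m × ZMod q) :=
    ⟨Fintype.equivOfCardEq (by simp [ZMod.card])⟩
  have hn : m ^ m < m * q := hmq.trans_lt (lt_mul_of_one_lt_left hq.pos (by omega))
  have hε : (((m : ℝ) ^ 2)⁻¹) ^ (-c) ≤ (m : ℝ) ^ m := inv_sq_rpow_neg_le (by omega) hcm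
  refine ⟨((m : ℝ) ^ 2)⁻¹, by positivity, ?_, m * q,
    (SimpleGraph.cycleGraph m).comap fun v => (e v).1, hε.trans (by exact_mod_cast hn.le), ?_, ?_⟩
  · have : (3 : ℝ) < m := by exact_mod_cast hm3
    rw [one_div]
    exact inv_strictAnti₀ two_pos (by nlinarith)
  · simpa using far_blowup_of_isEmpty_hom (SimpleGraph.cycleGraph m) a e fun H hH =>
      isEmpty_hom_of_mem_inducedFree_oddCycleFamily hodd (by omega) hn hH
  · refine inducedOn_mem_inducedFree fun p hp hpk =>
      isEmpty_embedding_cycleGraph_blowup hm3 _ hp (hpk.trans (Nat.ceil_le.mpr ?_))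
    exact_mod_cast hε

/-- There is a family of graphs containing a bipartite graph, a co-bipartite
graph and a split graph for which being induced `𝓕`-free is not easily testable. -/
theorem exists_family_bip_cobip_split_not_easily_testable :
    ∃ 𝓕 : Set (Σ k : ℕ, SimpleGraph (Fin k)),
      (∃ p ∈ 𝓕, IsBipGraph p.2) ∧ (∃ p ∈ 𝓕, IsCoBipGraph p.2) ∧ (∃ p ∈ 𝓕, IsSplitGraph p.2) ∧
      ¬ EasilyTestable (InducedFree 𝓕) := by
  have half_mem : ⟨6, halfGraph 6⟩ ∈ oddCycleFamily := by simp [oddCycleFamily]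
  have triangle_mem : ⟨3, ⊤⟩ ∈ oddCycleFamily := by simp [oddCycleFamily]
  exact ⟨oddCycleFamily, ⟨_, half_mem, isBipGraph_halfGraph 6⟩,
    ⟨_, triangle_mem, isCoBipGraph_top _⟩, ⟨_, triangle_mem, isSplitGraph_top _⟩,
    not_easilyTestable_oddCycleFamily⟩

end
end

section
/- If a family F of graphs contains a bipartite graph, a co-bipartite graph and a split graph, then F has a bipartite obstruction: there exists a bipartite graph H with bipartition (S,T) such that every completion of H contains an induced copy of some member of F. -/
open scoped Classical
open Finset

noncomputable section

/-!
By Ramsey's theorem, every finite bipartite graph `R` sits inside a finite one all of whose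
completions contain a copy of `R` with each side a clique or an independent set. Apply this to the
adjacency relation of the disjoint union of a bipartite, a co-bipartite and a split member of `𝓕`.
Whichever of clique and independent set the two sides turn out to be, one of the three members
splits into two parts of exactly these kinds; sending one part to the left copy of its vertices and
the other part to the right copy embeds it into the completion.
-/

section Ramsey

variable {V : Type*} (G : SimpleGraph V)

theorem exists_isNClique_succ_subset {v : V} [DecidablePred (G.Adj v)] {S C : Finset V} {r : ℕ}
    (hv : v ∈ S) (hCS : C ⊆ {x ∈ S | G.Adj v x}) (hC : G.IsNClique r C) :
    ∃ D ⊆ S, G.IsNClique (r + 1) D :=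
  ⟨insert v C, insert_subset hv (hCS.trans (filter_subset _ _)),
    hC.insert fun _ hx => (mem_filter.mp (hCS hx)).2⟩

theorem card_filter_adj_add_card_filter_compl_adj {v : V} {S : Finset V} (hv : v ∈ S) :
    #{x ∈ S | G.Adj v x} + #{x ∈ S | Gᶜ.Adj v x} + 1 = #S := by
  have hadj : {x ∈ S.erase v | G.Adj v x} = {x ∈ S | G.Adj v x} := by
    grind [G.ne_of_adj]
  have hcompl : {x ∈ S.erase v | ¬ G.Adj v x} = {x ∈ S | Gᶜ.Adj v x} := by
    grind [SimpleGraph.compl_adj]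
  rw [← hadj, ← hcompl, card_filter_add_card_filter_not, card_erase_add_one hv]

theorem exists_isNClique_or_isNClique_compl (r s : ℕ) (S : Finset V)
    (hS : (r + s).choose r ≤ #S) :
    (∃ C ⊆ S, G.IsNClique (r + 1) C) ∨ ∃ C ⊆ S, Gᶜ.IsNClique (s + 1) C := by
  induction r generalizing s S with
  | zero =>
    obtain ⟨v, hv⟩ : S.Nonempty := card_pos.mp (by simpa using hS)
    exact .inl ⟨{v}, by simpa using hv, by simp⟩
  | succ r ihr =>
    induction s generalizing S with
    | zero =>
      obtain ⟨v, hv⟩ : S.Nonempty := card_pos.mp (by simpa using hS)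
      exact .inr ⟨{v}, by simpa using hv, by simp⟩
    | succ s ihs =>
      have pascal : (r + 1 + (s + 1)).choose (r + 1) =
          (r + (s + 1)).choose r + (r + 1 + s).choose (r + 1) := by
        rw [show r + 1 + (s + 1) = r + (s + 1) + 1 by ring, Nat.choose_succ_succ,
          show r + (s + 1) = r + 1 + s by ring]
      obtain ⟨v, hv⟩ : S.Nonempty :=
        card_pos.mp ((Nat.choose_pos (Nat.le_add_right _ _)).trans_le hS)
      have hcard := card_filter_adj_add_card_filter_compl_adj G hv
      obtain hnbr | hnon : (r + (s + 1)).choose r ≤ #{x ∈ S | G.Adj v x} ∨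
          (r + 1 + s).choose (r + 1) ≤ #{x ∈ S | Gᶜ.Adj v x} := by lia
      · obtain ⟨C, hCS, hC⟩ | ⟨C, hCS, hC⟩ := ihr (s + 1) _ hnbr
        · exact .inl (exists_isNClique_succ_subset G hv hCS hC)
        · exact .inr ⟨C, hCS.trans (filter_subset _ _), hC⟩
      · obtain ⟨C, hCS, hC⟩ | ⟨C, hCS, hC⟩ := ihs _ hnon
        · exact .inl ⟨C, hCS.trans (filter_subset _ _), hC⟩
        · exact .inr (exists_isNClique_succ_subset Gᶜ hv hCS hC)

end Ramsey

section IsHomogeneous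

variable {V W : Type*} {G : SimpleGraph V} {c : Prop}

/-- The vertex set `A` is a clique of `G` if `c` holds and an independent set otherwise. Encoding
the two kinds of sets by a proposition lets the same argument treat both. -/
def IsHomogeneous (G : SimpleGraph V) (c : Prop) (A : Set V) : Prop :=
  A.Pairwise fun u v => (G.Adj u v ↔ c)

theorem isHomogeneous_true_iff {A : Set V} : IsHomogeneous G True A ↔ G.IsClique A := by
  simp only [IsHomogeneous, iff_true]

theorem isHomogeneous_false_iff {A : Set V} : IsHomogeneous G False A ↔ G.IsIndepSet A := by
  simp only [IsHomogeneous, iff_false]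

theorem IsHomogeneous.mono {A B : Set V} (hB : IsHomogeneous G c B) (hAB : A ⊆ B) :
    IsHomogeneous G c A :=
  Set.Pairwise.mono hAB hB

theorem IsHomogeneous.image_of_comap {f : W → V} {A : Set W}
    (hA : IsHomogeneous (G.comap f) c A) : IsHomogeneous G c (f '' A) := by
  rintro _ ⟨u, hu, rfl⟩ _ ⟨v, hv, rfl⟩ huv
  exact hA hu hv (ne_of_apply_ne f huv)

theorem exists_embedding_isHomogeneous_range (G : SimpleGraph V) (α : Type*) [Fintype α] [Fintype V]
    (hV : (Fintype.card α).centralBinom ≤ Fintype.card V) :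
    ∃ (c : Prop) (f : α ↪ V), IsHomogeneous G c (Set.range f) := by
  rw [Nat.centralBinom_eq_two_mul_choose, two_mul, ← card_univ (α := V)] at hV
  obtain ⟨C, -, hC⟩ | ⟨C, -, hC⟩ := exists_isNClique_or_isNClique_compl G _ _ univ hV <;>
    obtain ⟨f, hf⟩ := Function.Embedding.exists_of_card_le_finset
      ((Nat.le_succ (Fintype.card α)).trans_eq hC.card_eq.symm)
  · exact ⟨True, f, isHomogeneous_true_iff.mpr (hC.isClique.subset hf)⟩
  · exact ⟨False, f, isHomogeneous_false_iff.mpr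
      ((SimpleGraph.isClique_compl G).mp (hC.isClique.subset hf))⟩

end IsHomogeneous

section BipartiteRamsey

variable {α β S : Type*}

/-- The extension of a bipartite graph `R` with left side `α` to one with left side `S` in which
every injection `f : α ↪ S` is the left half of a copy of `R`: the right half is provided by the
vertices `(y, f)`, see `leftExtension_apply`. -/
def leftExtension (R : α → β → Prop) (S : Type*) (s : S) (t : β × (α ↪ S)) : Prop :=
  ∃ x, t.2 x = s ∧ R x t.1

@[simp]
theorem leftExtension_apply (R : α → β → Prop) (f : α ↪ S) (x : α) (y : β) :
    leftExtension R S (f x) (y, f) ↔ R x y := by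
  simp [leftExtension]

theorem exists_relation_forall_isHomogeneous_range [Finite α] [Finite β] (R : α → β → Prop) :
    ∃ (a b : ℕ) (B : Fin a → Fin b → Prop), ∀ (G : SimpleGraph (Fin a)) (K : SimpleGraph (Fin b)),
      ∃ (c d : Prop) (f : α ↪ Fin a) (g : β ↪ Fin b), (∀ x y, B (f x) (g y) ↔ R x y) ∧
        IsHomogeneous G c (Set.range f) ∧ IsHomogeneous K d (Set.range g) := by
  cases nonempty_fintype α
  cases nonempty_fintype β
  let S := Fin (Fintype.card α).centralBinom
  let T := β × (α ↪ S)
  let b := (Fintype.card T).centralBinom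
  obtain ⟨a, ⟨e⟩⟩ := Finite.exists_equiv_fin (S × (T ↪ Fin b))
  let B (s : Fin a) (t : Fin b) : Prop :=
    leftExtension (flip (leftExtension R S)) (Fin b) t (e.symm s)
  refine ⟨a, b, B, fun G K => ?_⟩
  -- The choice on the right comes first: it selects the copy of `S` on which `G` is examined.
  obtain ⟨d, g, hg⟩ := exists_embedding_isHomogeneous_range K T (by simp [b])
  let left : S ↪ Fin a := (Function.Embedding.sectL S g).trans e.toEmbedding
  obtain ⟨c, f, hf⟩ := exists_embedding_isHomogeneous_range (G.comap left) α (by simp [S])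
  let right : β ↪ Fin b := (Function.Embedding.sectL β f).trans g
  refine ⟨c, d, f.trans left, right, fun x y => ?_, ?_, ?_⟩
  · change leftExtension _ _ (g (y, f)) (e.symm (e (f x, g))) ↔ R x y
    rw [e.symm_apply_apply, leftExtension_apply]
    exact leftExtension_apply R f x y
  · rw [Function.Embedding.coe_trans, Set.range_comp]
    exact hf.image_of_comap
  · exact hg.mono (Set.range_comp_subset_range _ g)

end BipartiteRamsey

section HomogeneousPartition

variable {V W S T : Type*} {G : SimpleGraph V} {c d : Prop}

/-- The vertex set of `G` splits into two homogeneous parts, of the kinds `c` and `d`. Bipartite,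
split and co-bipartite graphs are the instances with none, one and both of `c` and `d` true. -/
def HasHomogeneousPartition (G : SimpleGraph V) (c d : Prop) : Prop :=
  ∃ A : Set V, IsHomogeneous G c A ∧ IsHomogeneous G d Aᶜ

theorem HasHomogeneousPartition.symm (h : HasHomogeneousPartition G c d) :
    HasHomogeneousPartition G d c := by
  obtain ⟨A, hc, hd⟩ := h
  exact ⟨Aᶜ, hd, by rwa [compl_compl]⟩

theorem IsBipGraph.hasHomogeneousPartition (h : IsBipGraph G) :
    HasHomogeneousPartition G False False := by
  obtain ⟨A, hA, hA'⟩ := h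
  exact ⟨A, isHomogeneous_false_iff.mpr fun u hu v hv _ => hA u hu v hv,
    isHomogeneous_false_iff.mpr fun u hu v hv _ => hA' u hu v hv⟩

theorem IsCoBipGraph.hasHomogeneousPartition (h : IsCoBipGraph G) :
    HasHomogeneousPartition G True True := by
  obtain ⟨A, hA, hA'⟩ := h
  exact ⟨A, isHomogeneous_true_iff.mpr hA, isHomogeneous_true_iff.mpr hA'⟩

theorem IsSplitGraph.hasHomogeneousPartition (h : IsSplitGraph G) :
    HasHomogeneousPartition G True False := by
  obtain ⟨A, hA, hA'⟩ := h
  exact ⟨A, isHomogeneous_true_iff.mpr hA,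
    isHomogeneous_false_iff.mpr fun u hu v hv _ => hA' u hu v hv⟩

/-- `G` is a completion of the bipartite graph with sides `S` and `T` and edge relation `B`. -/
def IsCompletion (B : S → T → Prop) (G : SimpleGraph (S ⊕ T)) : Prop :=
  ∀ s t, G.Adj (.inl s) (.inr t) ↔ B s t

theorem HasHomogeneousPartition.nonempty_embedding {P : SimpleGraph W} {G : SimpleGraph (S ⊕ T)}
    (hP : HasHomogeneousPartition P c d) (f : W ↪ S) (g : W ↪ T)
    (hadj : ∀ u v, G.Adj (.inl (f u)) (.inr (g v)) ↔ P.Adj u v)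
    (hf : IsHomogeneous (G.comap Sum.inl) c (Set.range f))
    (hg : IsHomogeneous (G.comap Sum.inr) d (Set.range g)) : Nonempty (P ↪g G) := by
  obtain ⟨A, hA, hA'⟩ := hP
  let φ : W → S ⊕ T := fun u => if u ∈ A then .inl (f u) else .inr (g u)
  have hφ : Function.Injective φ := by
    intro u v huv
    grind [f.injective.eq_iff, g.injective.eq_iff]
  refine ⟨⟨φ, hφ⟩, fun {u v} => ?_⟩
  change G.Adj (φ u) (φ v) ↔ P.Adj u v
  obtain rfl | huv := eq_or_ne u v
  · simp only [SimpleGraph.irrefl]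
  by_cases hu : u ∈ A <;> by_cases hv : v ∈ A
  · simp only [φ, if_pos hu, if_pos hv]
    exact (hf ⟨u, rfl⟩ ⟨v, rfl⟩ (f.injective.ne huv)).trans (hA hu hv huv).symm
  · simpa only [φ, if_pos hu, if_neg hv] using hadj u v
  · rw [G.adj_comm, P.adj_comm]
    simpa only [φ, if_neg hu, if_pos hv] using hadj v u
  · simp only [φ, if_neg hu, if_neg hv]
    exact (hg ⟨u, rfl⟩ ⟨v, rfl⟩ (g.injective.ne huv)).trans (hA' hu hv huv).symm

theorem exists_forall_isCompletion_nonempty_embedding [Finite V] (H : SimpleGraph V) :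
    ∃ (a b : ℕ) (B : Fin a → Fin b → Prop), ∀ G, IsCompletion B G →
      ∃ c d : Prop, ∀ {W : Type*} {P : SimpleGraph W}, P ↪g H → HasHomogeneousPartition P c d →
        Nonempty (P ↪g G) := by
  obtain ⟨a, b, B, hB⟩ := exists_relation_forall_isHomogeneous_range H.Adj
  refine ⟨a, b, B, fun G hG => ?_⟩
  obtain ⟨c, d, f, g, hfg, hf, hg⟩ := hB (G.comap Sum.inl) (G.comap Sum.inr)
  refine ⟨c, d, fun ι hP =>
    hP.nonempty_embedding (ι.toEmbedding.trans f) (ι.toEmbedding.trans g) (fun u v => ?_)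
      (hf.mono (Set.range_comp_subset_range ι f))
      (hg.mono (Set.range_comp_subset_range ι g))⟩
  exact (hG _ _).trans ((hfg _ _).trans ι.map_adj_iff)

end HomogeneousPartition

/-- If a family `𝓕` contains a bipartite graph, a co-bipartite graph and a
split graph, then `𝓕` has a bipartite obstruction: a bipartite graph `H` with bipartition
`(S, T)` (encoded by the relation `B` between `S = Fin a` and `T = Fin b`) such that every
completion of `H` (i.e. every graph agreeing with `B` between `S` and `T`) contains an induced
copy of some member of `𝓕`. -/
theorem exists_bipartite_obstruction
    (𝓕 : Set (Σ k : ℕ, SimpleGraph (Fin k)))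
    (hbip : ∃ p ∈ 𝓕, IsBipGraph p.2)
    (hcobip : ∃ p ∈ 𝓕, IsCoBipGraph p.2)
    (hsplit : ∃ p ∈ 𝓕, IsSplitGraph p.2) :
    ∃ (a b : ℕ) (B : Fin a → Fin b → Prop),
      ∀ G : SimpleGraph (Fin a ⊕ Fin b),
        (∀ s : Fin a, ∀ t : Fin b, G.Adj (Sum.inl s) (Sum.inr t) ↔ B s t) →
        ∃ p ∈ 𝓕, Nonempty (p.2 ↪g G) := by
  obtain ⟨p, hp, hpBip⟩ := hbip
  obtain ⟨q, hq, hqCobip⟩ := hcobip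
  obtain ⟨r, hr, hrSplit⟩ := hsplit
  obtain ⟨a, b, B, hB⟩ :=
    exists_forall_isCompletion_nonempty_embedding (p.2 ⊕g q.2 ⊕g r.2)
  refine ⟨a, b, B, fun G hG => ?_⟩
  obtain ⟨c, d, hembed⟩ := hB G hG
  let ιp : p.2 ↪g p.2 ⊕g q.2 ⊕g r.2 :=
    SimpleGraph.Embedding.sumInl.comp SimpleGraph.Embedding.sumInl
  let ιq : q.2 ↪g p.2 ⊕g q.2 ⊕g r.2 :=
    SimpleGraph.Embedding.sumInl.comp SimpleGraph.Embedding.sumInr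
  let ιr : r.2 ↪g p.2 ⊕g q.2 ⊕g r.2 := SimpleGraph.Embedding.sumInr
  obtain rfl | rfl := Classical.propComplete c <;> obtain rfl | rfl := Classical.propComplete d
  · exact ⟨q, hq, hembed ιq hqCobip.hasHomogeneousPartition⟩
  · exact ⟨r, hr, hembed ιr hrSplit.hasHomogeneousPartition⟩
  · exact ⟨r, hr, hembed ιr hrSplit.hasHomogeneousPartition.symm⟩
  · exact ⟨p, hp, hembed ιp hpBip.hasHomogeneousPartition⟩

end
end

section
/- Let H be a bipartite graph with bipartition (S,T) where |S| = |T| = k, let α ∈ (0,1), and suppose an n-vertex graph G with n ≥ 4k/α contains at least α·n^{2k} induced bipartite copies of H. Then at least a 2/3-fraction of the ⌈4k/α⌉-element vertex subsets of G contain an induced bipartite copy of H. -/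
open scoped Classical
open Finset

noncomputable section

/-- The number of induced bipartite copies in `G` of the bipartite graph with bipartition
`(Fin k, Fin k)` and edge relation `B`: injections `φ` of the two sides into `V(G)` such that
for all `s ∈ S`, `t ∈ T` we have `B s t ↔ φ s ∼ φ t` (no condition inside the sides). -/
def bipCopyCount {k n : ℕ} (B : Fin k → Fin k → Prop) (G : SimpleGraph (Fin n)) : ℕ :=
  Set.ncard {φ : (Fin k ⊕ Fin k) ↪ Fin n |
    ∀ s t : Fin k, B s t ↔ G.Adj (φ (Sum.inl s)) (φ (Sum.inr t))}

/-- The edge density `d(X,Y)` between two (disjoint) vertex sets, as a real number. -/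
def dens {n : ℕ} (G : SimpleGraph (Fin n)) (X Y : Finset (Fin n)) : ℝ :=
  (G.edgeDensity X Y : ℝ)

/-- The pair `(X,Y)` is `δ`-homogeneous: `d(X,Y) ≥ 1 - δ` or `d(X,Y) ≤ δ`. -/
def HomPair {n : ℕ} (G : SimpleGraph (Fin n)) (δ : ℝ) (X Y : Finset (Fin n)) : Prop :=
  1 - δ ≤ dens G X Y ∨ dens G X Y ≤ δ

/-- The dominant value of the pair `(X,Y)` is `1` (it is `0` otherwise). -/
def DomOne {n : ℕ} (G : SimpleGraph (Fin n)) (X Y : Finset (Fin n)) : Prop :=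
  1 / 2 ≤ dens G X Y

/-- `Q` is an equipartition: the parts are disjoint, cover everything, and their sizes
differ by at most one. -/
def IsEquipartition {n q : ℕ} (Q : Fin q → Finset (Fin n)) : Prop :=
  (∀ i j : Fin q, i ≠ j → Disjoint (Q i) (Q j)) ∧ (∀ v : Fin n, ∃ i, v ∈ Q i) ∧
  (∀ i j : Fin q, (Q i).card ≤ (Q j).card + 1)

/-! Sample `j = ⌊c / α⌋` independent uniform maps `S ⊕ T → V(G)`, and then a uniform `m`-set `Q`
among those containing all their values. By symmetry `Q` is a uniform `m`-set of vertices. If `Q`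
contains no copy of `H`, then none of the `j` maps is a copy, and this has probability at most
`(1 - α) ^ j ≤ 1 / (c + 1)`. -/

section ExpectedLoad

variable {α β : Type*} [Fintype α] [Fintype β] (r : α → β → Prop)

/-- The expected number of `a : α` choosing `b` when every `a` chooses an `r`-related element of
`β` uniformly at random. It replaces the degree of `b` in double counting when the degrees on `α`
vary. An `a` without related elements makes no choice. -/
def expectedLoad (b : β) : ℚ :=
  ∑ a with r a b, (#{b' | r a b'} : ℚ)⁻¹

lemma sum_expectedLoad (A : Finset β) :
    ∑ b ∈ A, expectedLoad r b = ∑ a, (#{b ∈ A | r a b} : ℚ) * (#{b | r a b} : ℚ)⁻¹ := by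
  simp only [expectedLoad, sum_filter]
  rw [sum_comm]
  simp only [← sum_filter, sum_const, nsmul_eq_mul]

variable {r}

lemma sum_expectedLoad_univ (hr : ∀ a, ∃ b, r a b) :
    ∑ b, expectedLoad r b = Fintype.card α := by
  have deg_ne_zero (a : α) : (#{b | r a b} : ℚ) ≠ 0 := by
    obtain ⟨b, hab⟩ := hr a
    exact_mod_cast card_ne_zero_of_mem (mem_filter.2 ⟨mem_univ b, hab⟩)
  simp only [sum_expectedLoad, mul_inv_cancel₀ (deg_ne_zero _), sum_const, card_univ,
    nsmul_eq_mul, mul_one]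

lemma sum_expectedLoad_le (A : Finset β) :
    ∑ b ∈ A, expectedLoad r b ≤ #{a | ∃ b ∈ A, r a b} := by
  rw [sum_expectedLoad, natCast_card_filter]
  refine sum_le_sum fun a _ ↦ ?_
  split_ifs with ha
  · exact mul_inv_le_one_of_le₀ (by gcongr; exact A.subset_univ) (by positivity)
  · have : {b ∈ A | r a b} = ∅ := filter_eq_empty_iff.2 fun b hb hab ↦ ha ⟨b, hb, hab⟩
    simp only [this, card_empty, Nat.cast_zero, zero_mul, le_refl]

variable {G : Type*} [Group G] [MulAction G α] [MulAction G β]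

lemma expectedLoad_smul (hr : ∀ (g : G) a b, r (g • a) (g • b) ↔ r a b) (g : G) (b : β) :
    expectedLoad r (g • b) = expectedLoad r b := by
  have deg_smul (a : α) : #{b' | r (g • a) b'} = #{b' | r a b'} :=
    (card_equiv (MulAction.toPerm g) fun b' ↦ by simp [hr]).symm
  refine (sum_equiv (MulAction.toPerm g) (fun a ↦ ?_) fun a _ ↦ ?_).symm
  · simp [hr]
  · simp [deg_smul]

lemma card_mul_expectedLoad [MulAction.IsPretransitive G β]
    (hr : ∀ (g : G) a b, r (g • a) (g • b) ↔ r a b) (hr_total : ∀ a, ∃ b, r a b) (b : β) :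
    Fintype.card β * expectedLoad r b = Fintype.card α := by
  have load_const (b' : β) : expectedLoad r b' = expectedLoad r b := by
    obtain ⟨g, rfl⟩ := MulAction.exists_smul_eq G b b'
    exact expectedLoad_smul hr g b
  rw [← sum_expectedLoad_univ hr_total]
  simp only [load_const, sum_const, card_univ, nsmul_eq_mul]

variable (G) in
/-- By transitivity every load is the average `card α / card β`, and only neighbors of `A`
contribute to the loads on `A`. -/
lemma card_mul_card_le_card_neighbors_mul_card [MulAction.IsPretransitive G β]
    (hr : ∀ (g : G) a b, r (g • a) (g • b) ↔ r a b) (hr_total : ∀ a, ∃ b, r a b)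
    (A : Finset β) :
    #A * Fintype.card α ≤ #{a | ∃ b ∈ A, r a b} * Fintype.card β := by
  suffices (#A * Fintype.card α : ℚ) ≤ #{a | ∃ b ∈ A, r a b} * Fintype.card β by
    exact_mod_cast this
  calc (#A * Fintype.card α : ℚ)
      = (∑ b ∈ A, expectedLoad r b) * Fintype.card β := by
        rw [sum_mul, ← nsmul_eq_mul, ← sum_const]
        exact sum_congr rfl fun b _ ↦ by rw [← card_mul_expectedLoad hr hr_total b, mul_comm]
    _ ≤ #{a | ∃ b ∈ A, r a b} * Fintype.card β := by
        gcongr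
        exact sum_expectedLoad_le A

end ExpectedLoad

section Sampling

variable {ι V : Type*} [Fintype ι] [Fintype V] {m : ℕ}

lemma exists_powersetCard_forall_mem (hι : Fintype.card ι ≤ m) (hm : m ≤ Fintype.card V)
    (f : ι → V) : ∃ Q : Set.powersetCard V m, ∀ i, f i ∈ Q := by
  obtain ⟨Q, hfQ, hQ⟩ := exists_superset_card_eq (s := univ.image f) (card_image_le.trans hι) hm
  exact ⟨⟨Q, hQ⟩, fun i ↦ hfQ (mem_image_of_mem f (mem_univ i))⟩

open scoped Pointwise in
lemma card_mul_card_fun_le_of_subset_powersetCard [DecidableEq ι] (hι : Fintype.card ι ≤ m)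
    {𝒜 : Finset (Finset V)} (h𝒜 : 𝒜 ⊆ powersetCard m univ) :
    #𝒜 * Fintype.card (ι → V) ≤
      #{f : ι → V | ∃ Q ∈ 𝒜, ∀ i, f i ∈ Q} * #(powersetCard m (univ : Finset V)) := by
  rcases lt_or_ge (Fintype.card V) m with hm | hm
  · have : 𝒜 = ∅ := subset_empty.1 (h𝒜.trans_eq (powersetCard_eq_empty.2 hm))
    simp only [this, card_empty, zero_mul, zero_le]
  have := Set.powersetCard.isPretransitive (α := V) (n := m)
  have neighbors_bound := card_mul_card_le_card_neighbors_mul_card (Equiv.Perm V)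
    (r := fun (f : ι → V) (Q : Set.powersetCard V m) ↦ ∀ i, f i ∈ (Q : Finset V))
    (fun g f Q ↦ by
      simp only [Set.powersetCard.coe_smul, Pi.smul_apply, smul_mem_smul_finset_iff])
    (exists_powersetCard_forall_mem hι hm) (𝒜.subtype (· ∈ Set.powersetCard V m))
  have card_preimage : #(𝒜.subtype (· ∈ Set.powersetCard V m)) = #𝒜 := by
    rw [card_subtype,
      filter_true_of_mem fun Q hQ ↦ Set.powersetCard.mem_iff.2 (mem_powersetCard.1 (h𝒜 hQ)).2]
  have card_sets :
      Fintype.card (Set.powersetCard V m) = #(powersetCard m (univ : Finset V)) := by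
    rw [← Nat.card_eq_fintype_card, Set.powersetCard.card, Finset.card_powersetCard, card_univ,
      Nat.card_eq_fintype_card]
  rw [card_preimage, card_sets] at neighbors_bound
  refine neighbors_bound.trans (Nat.mul_le_mul_right _ (card_le_card fun f ↦ ?_))
  simp only [mem_filter, mem_univ, true_and, mem_subtype]
  rintro ⟨Q, hQ, hfQ⟩
  exact ⟨Q, hQ, hfQ⟩

lemma card_avoiding_mul_pow_le [DecidableEq ι] {j : ℕ} (hj : j * Fintype.card ι ≤ m)
    (C : Finset (ι → V)) :
    #{Q ∈ powersetCard m univ | ¬ ∃ f ∈ C, ∀ i, f i ∈ Q} * Fintype.card (ι → V) ^ j ≤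
      #Cᶜ ^ j * #(powersetCard m (univ : Finset V)) := by
  let 𝒜 : Finset (Finset V) := {Q ∈ powersetCard m univ | ¬ ∃ f ∈ C, ∀ i, f i ∈ Q}
  have card_blocks : Fintype.card (Fin j × ι) ≤ m := by
    rwa [Fintype.card_prod, Fintype.card_fin]
  have card_fun : Fintype.card (Fin j × ι → V) = Fintype.card (ι → V) ^ j := by
    rw [Fintype.card_congr (Equiv.curry (Fin j) ι V), Fintype.card_fun, Fintype.card_fin]
  have card_le : #{f : Fin j × ι → V | ∃ Q ∈ 𝒜, ∀ x, f x ∈ Q} ≤ #Cᶜ ^ j := by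
    rw [← Fintype.card_piFinset_const]
    refine card_le_card_of_injOn (Equiv.curry (Fin j) ι V) (fun f hf ↦ ?_)
      (Equiv.injective _).injOn
    obtain ⟨Q, hQ, hfQ⟩ := (mem_filter.1 hf).2
    refine Fintype.mem_piFinset.2 fun i ↦ mem_compl.2 fun hi ↦ ?_
    exact (mem_filter.1 hQ).2 ⟨_, hi, fun x ↦ hfQ (i, x)⟩
  rw [← card_fun]
  exact (card_mul_card_fun_le_of_subset_powersetCard card_blocks (filter_subset _ _)).trans
    (Nat.mul_le_mul_right _ card_le)

end Sampling

section Amplification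

variable {x c : ℝ}

lemma one_sub_pow_mul_one_add_mul_le_one (hx0 : 0 ≤ x) (hx1 : x ≤ 1) (n : ℕ) :
    (1 - x) ^ n * (1 + n * x) ≤ 1 := by
  have : 0 ≤ 1 - x := sub_nonneg.2 hx1
  calc (1 - x) ^ n * (1 + n * x)
      ≤ (1 - x) ^ n * (1 + x) ^ n := by
        gcongr
        exact one_add_mul_le_pow (by linarith) n
    _ = (1 - x ^ 2) ^ n := by rw [← mul_pow]; ring
    _ ≤ 1 := pow_le_one₀ (by nlinarith) (by nlinarith)

lemma one_sub_pow_floor_div_le_one_div_add_one (hx0 : 0 < x) (hx1 : x ≤ 1) (hc : 1 ≤ c) :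
    (1 - x) ^ ⌊c / x⌋₊ ≤ 1 / (c + 1) := by
  have one_le_floor : 1 ≤ ⌊c / x⌋₊ :=
    Nat.le_floor <| by rw [Nat.cast_one, one_le_div hx0]; exact hx1.trans hc
  obtain ⟨n, hn⟩ := Nat.exists_eq_add_of_le' one_le_floor
  have lt_mul : c < (n + 2) * x := by
    have := Nat.lt_floor_add_one (c / x)
    rw [hn, div_lt_iff₀ hx0] at this
    push_cast at this
    linarith
  rw [hn, le_div_iff₀ (by linarith)]
  calc (1 - x) ^ (n + 1) * (c + 1)
      = (1 - x) ^ n * ((c + 1) * (1 - x)) := by ring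
    _ ≤ (1 - x) ^ n * (1 + n * x) := by
        have : 0 ≤ 1 - x := sub_nonneg.2 hx1
        gcongr
        nlinarith
    _ ≤ 1 := one_sub_pow_mul_one_add_mul_le_one hx0.le hx1 n

end Amplification

section Density

variable {ι V : Type*} [Fintype ι] [DecidableEq ι] [Fintype V] {m : ℕ} {α c : ℝ}

lemma card_avoiding_le_one_div_mul [Nonempty (ι → V)] (hα : 0 < α) (hc : 1 ≤ c)
    (hm : c * Fintype.card ι / α ≤ m) {C : Finset (ι → V)}
    (hC : α * Fintype.card (ι → V) ≤ #C) :
    (#{Q ∈ powersetCard m univ | ¬ ∃ f ∈ C, ∀ i, f i ∈ Q} : ℝ) ≤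
      1 / (c + 1) * #(powersetCard m (univ : Finset V)) := by
  set N := Fintype.card (ι → V)
  set j := ⌊c / α⌋₊
  have N_pos : (0 : ℝ) < N := Nat.cast_pos.2 Fintype.card_pos
  have hα1 : α ≤ 1 := by
    have : (#C : ℝ) ≤ N := Nat.cast_le.2 C.card_le_univ
    exact le_of_mul_le_mul_right (by linarith) N_pos
  have hj : j * Fintype.card ι ≤ m := by
    suffices (j * Fintype.card ι : ℝ) ≤ m by exact_mod_cast this
    calc (j * Fintype.card ι : ℝ)
        ≤ c / α * Fintype.card ι := by gcongr; exact Nat.floor_le (by positivity)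
      _ = c * Fintype.card ι / α := by ring
      _ ≤ m := hm
  have card_compl_le : (#Cᶜ : ℝ) ≤ (1 - α) * N := by
    rw [card_compl, Nat.cast_sub C.card_le_univ]
    linarith
  refine le_of_mul_le_mul_right ?_ (pow_pos N_pos j)
  calc (#{Q ∈ powersetCard m univ | ¬ ∃ f ∈ C, ∀ i, f i ∈ Q} : ℝ) * N ^ j
      ≤ #Cᶜ ^ j * #(powersetCard m (univ : Finset V)) := by
        exact_mod_cast card_avoiding_mul_pow_le hj C
    _ ≤ ((1 - α) * N) ^ j * #(powersetCard m (univ : Finset V)) := by gcongr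
    _ = (1 - α) ^ j * #(powersetCard m (univ : Finset V)) * N ^ j := by rw [mul_pow]; ring
    _ ≤ 1 / (c + 1) * #(powersetCard m (univ : Finset V)) * N ^ j := by
        gcongr
        exact one_sub_pow_floor_div_le_one_div_add_one hα hα1 hc

lemma mul_card_powersetCard_le_card_containing (hα : 0 < α) (hc : 1 ≤ c)
    (hm : c * Fintype.card ι / α ≤ m) {C : Finset (ι → V)} (hC : α * Fintype.card (ι → V) ≤ #C) :
    c / (c + 1) * #(powersetCard m (univ : Finset V)) ≤
      #{Q ∈ powersetCard m univ | ∃ f ∈ C, ∀ i, f i ∈ Q} := by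
  rcases isEmpty_or_nonempty (ι → V) with no_maps | _
  · obtain ⟨_, _⟩ := isEmpty_fun.1 no_maps
    have m_pos : 0 < m := by
      have : (0 : ℝ) < c * Fintype.card ι / α := by positivity
      exact_mod_cast this.trans_le hm
    have no_sets : powersetCard m (univ : Finset V) = ∅ :=
      powersetCard_eq_empty.2 (by simpa only [univ_eq_empty, card_empty] using m_pos)
    simp only [no_sets, filter_empty, card_empty, Nat.cast_zero, mul_zero, le_refl]
  have avoiding_le := card_avoiding_le_one_div_mul hα hc hm hC
  have split := card_filter_add_card_filter_not (s := powersetCard m (univ : Finset V))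
    fun Q ↦ ∃ f ∈ C, ∀ i, f i ∈ Q
  rw [← split] at avoiding_le ⊢
  have fraction_eq : c / (c + 1) = 1 - 1 / (c + 1) := by field_simp; ring
  rw [fraction_eq]
  push_cast at avoiding_le ⊢
  linarith

end Density

theorem sample_contains_induced_bipartite_copy_general {S T V : Type*} [Fintype S] [Fintype T]
    [Fintype V] (B : S → T → Prop) (G : SimpleGraph V) {α c : ℝ} (hα : 0 < α) (hc : 1 ≤ c) {m : ℕ}
    (hm : c * (Fintype.card S + Fintype.card T) / α ≤ m)
    (hcopies : α * (Fintype.card V : ℝ) ^ (Fintype.card S + Fintype.card T) ≤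
      Set.ncard {φ : S ⊕ T ↪ V | ∀ s t, B s t ↔ G.Adj (φ (.inl s)) (φ (.inr t))}) :
    c / (c + 1) * #(powersetCard m (univ : Finset V)) ≤
      #{Q ∈ powersetCard m univ | ∃ φ : S ⊕ T ↪ V, (∀ x, φ x ∈ Q) ∧
        ∀ s t, B s t ↔ G.Adj (φ (.inl s)) (φ (.inr t))} := by
  set copies := {φ : S ⊕ T ↪ V | ∀ s t, B s t ↔ G.Adj (φ (.inl s)) (φ (.inr t))}
  have card_copies : #(copies.toFinset.image (⇑)) = copies.ncard := by
    rw [card_image_of_injective _ DFunLike.coe_injective, Set.ncard_eq_toFinset_card']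
  refine (mul_card_powersetCard_le_card_containing (C := copies.toFinset.image (⇑))
    hα hc ?_ ?_).trans ?_
  · simpa using hm
  · simpa [card_copies] using hcopies
  · gcongr with Q
    simp only [mem_image, Set.mem_toFinset]
    rintro ⟨_, ⟨φ, hφ, rfl⟩, hφQ⟩
    exact ⟨φ, hφQ, hφ⟩

/-- If an `n`-vertex graph `G` (with `n ≥ 4k/α`) contains at least
`α·n^{2k}` induced bipartite copies of a bipartite graph `H` with sides of size `k`, then at
least a `2/3`-fraction of the `⌈4k/α⌉`-element vertex subsets contain such a copy. -/
theorem sample_contains_induced_bipartite_copy {k n : ℕ} (B : Fin k → Fin k → Prop)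
    (α : ℝ) (hα0 : 0 < α) (hα1 : α < 1) (G : SimpleGraph (Fin n))
    (hn : (4 * k / α : ℝ) ≤ (n : ℝ))
    (hcopies : α * (n : ℝ) ^ (2 * k) ≤ (bipCopyCount B G : ℝ)) :
    (2 / 3 : ℝ) * (((Finset.univ : Finset (Fin n)).powersetCard ⌈(4 * k / α : ℝ)⌉₊).card : ℝ) ≤
      ((((Finset.univ : Finset (Fin n)).powersetCard ⌈(4 * k / α : ℝ)⌉₊).filter
        fun Q => ∃ φ : (Fin k ⊕ Fin k) ↪ Fin n, (∀ x, φ x ∈ Q) ∧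
          ∀ s t : Fin k, B s t ↔ G.Adj (φ (Sum.inl s)) (φ (Sum.inr t))).card : ℝ) := by
  have hm : (2 * (Fintype.card (Fin k) + Fintype.card (Fin k)) / α : ℝ) ≤ ⌈4 * k / α⌉₊ :=
    (by rw [Fintype.card_fin]; ring : _ = 4 * k / α).trans_le (Nat.le_ceil _)
  convert sample_contains_induced_bipartite_copy_general B G hα0 one_le_two hm
    (by simpa only [bipCopyCount, two_mul, Fintype.card_fin] using hcopies) using 4
  norm_num

end
end

section
/- For every integer k ≥ 1 there is a constant C = C(k) such that the following holds for every bipartite graph H with bipartition (S,T), |S| = |T| = k, and all γ, δ ∈ (0,1/2): there is n₀ = n₀(k,δ,γ) such that every graph G on n ≥ n₀ vertices either contains at least (γδ)^C·n^{2k} induced bipartite copies of H, or there exist an equipartition Q = {Q₁,…,Q_q} of V(G) with δ^{-1} ≤ q ≤ δ^{-C} parts and subsets U_i ⊆ Q_i such that: (1) for all but at most δq² of the pairs 1 ≤ i < j ≤ q, the pair (Q_i,Q_j) is δ-homogeneous and the dominant value of (U_i,U_j) equals the dominant value of (Q_i,Q_j); (2) (U_i,U_j) is γ-homogeneous for every 1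 ≤ i < j ≤ q; and (3) |U_i| ≥ (γδ)^C·n for every 1 ≤ i ≤ q. -/
open scoped Classical
open Finset

noncomputable section

open scoped BigOperators

/-!
Suppose `G` contains few copies of `H`, and sample `M` vertices and `t` further vertices at
random, with `M` and `t` polynomial in `1 / ε`. If many of the `M` vertices had neighbourhoods at
pairwise distance more than `ε`, the `t` vertices would typically distinguish all of them, and by
the Sauer–Shelah lemma their traces would shatter a set of size `|S| + |T|`, hence contain a copy
of `H`. So new neighbourhoods are rare in the sample, which means that the neighbourhoods of
almost all vertices lie within `ε` of polynomially many: the vertices can be clustered. Random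
pairs between two clusters can be compared through a path that moves one endpoint at a time inside
its cluster, so `d (1 - d)` is small on average and almost all pairs of clusters are homogeneous.

A clustering with error of order `δ ^ 2`, made equitable, is the partition `Q` into `q` parts. Its
common refinement with a clustering with error of order `γ / q ^ 4` provides the `U i`: take the
fine cluster of a random vertex of `Q i`. With the fine error this small, a union bound over pairs
makes all `U i` large and all pairs `(U i, U j)` homogeneous. The density of a `δ`-homogeneous
pair of parts is the average of the densities of its fine pairs, so few of these have the other
dominant value.
-/

section Probability

variable {α β ι : Type*}

/-- The probability that `p a` holds for `a` chosen uniformly from `s`; it is `0` for `s = ∅`. -/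
def prob (s : Finset α) (p : α → Prop) : ℝ := 𝔼 a ∈ s, if p a then 1 else 0

lemma prob_eq_expect_ite (s : Finset α) (p : α → Prop) [DecidablePred p] :
    prob s p = 𝔼 a ∈ s, if p a then 1 else 0 := by
  rw [prob]
  congr!

lemma prob_eq_card_div (s : Finset α) (p : α → Prop) [DecidablePred p] :
    prob s p = (#{a ∈ s | p a} : ℝ) / #s := by
  rw [prob_eq_expect_ite, expect_eq_sum_div_card, sum_boole]

lemma prob_nonneg (s : Finset α) (p : α → Prop) : 0 ≤ prob s p :=
  expect_nonneg fun _ _ => by split_ifs <;> norm_num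

lemma mul_prob_le_expect {s : Finset α} {p : α → Prop} {F : α → ℝ} {c : ℝ}
    (hF : ∀ a ∈ s, 0 ≤ F a) (hc : ∀ a ∈ s, p a → c ≤ F a) : c * prob s p ≤ 𝔼 a ∈ s, F a := by
  rw [prob, mul_expect]
  refine expect_le_expect fun a ha => ?_
  split_ifs with hp
  · simpa only [mul_one] using hc a ha hp
  · simpa only [mul_zero] using hF a ha

lemma prob_mono {s : Finset α} {p q : α → Prop} (h : ∀ a ∈ s, p a → q a) :
    prob s p ≤ prob s q :=
  expect_le_expect fun a ha => by
    by_cases hp : p a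
    · rw [if_pos hp, if_pos (h a ha hp)]
    · rw [if_neg hp]; split_ifs <;> norm_num

lemma prob_le_one (s : Finset α) (p : α → Prop) : prob s p ≤ 1 := by
  rw [prob_eq_card_div]
  exact div_le_one_of_le₀ (by exact_mod_cast card_filter_le s p) (by positivity)

lemma prob_not {s : Finset α} (hs : s.Nonempty) (p : α → Prop) :
    prob s (fun a => ¬ p a) = 1 - prob s p := by
  rw [eq_sub_iff_add_eq, prob, prob, ← expect_add_distrib]
  refine Eq.trans (expect_congr rfl fun a _ => ?_) (expect_const hs 1)
  by_cases hp : p a <;> simp [hp]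

lemma prob_or_le (s : Finset α) (p q : α → Prop) :
    prob s (fun a => p a ∨ q a) ≤ prob s p + prob s q := by
  rw [prob, prob, prob, ← expect_add_distrib]
  exact expect_le_expect fun a _ => by by_cases hp : p a <;> by_cases hq : q a <;> simp [hp, hq]

lemma prob_exists_le [Fintype ι] (s : Finset α) (p : ι → α → Prop) :
    prob s (fun a => ∃ i, p i a) ≤ ∑ i, prob s (p i) := by
  simp only [prob]
  rw [← expect_sum_comm]
  refine expect_le_expect fun a _ => ?_
  split_ifs with h
  · obtain ⟨i, hi⟩ := h
    calc (1 : ℝ) = if p i a then 1 else 0 := (if_pos hi).symm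
      _ ≤ ∑ i, if p i a then 1 else 0 :=
        single_le_sum (f := fun i => if p i a then (1 : ℝ) else 0)
          (fun _ _ => by split_ifs <;> norm_num) (mem_univ i)
  · exact sum_nonneg fun _ _ => by split_ifs <;> norm_num

lemma prob_exists_le_card_mul [Fintype ι] {s : Finset α} {p : ι → α → Prop} {c : ℝ}
    (h : ∀ i, prob s (p i) ≤ c) : prob s (fun a => ∃ i, p i a) ≤ Fintype.card ι * c :=
  (prob_exists_le s p).trans <| (sum_le_card_nsmul _ _ c fun i _ => h i).trans_eq <| by
    rw [nsmul_eq_mul, card_univ]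

lemma prob_product (s : Finset α) (t : Finset β) (p : α × β → Prop) :
    prob (s ×ˢ t) p = 𝔼 a ∈ s, prob t fun b => p (a, b) :=
  expect_product _ _ _

end Probability

section Resampling

variable {ι V M : Type*} [Fintype ι] [DecidableEq ι] [AddCommMonoid M] [Module ℚ≥0 M]

lemma expect_update {Q : ι → Finset V} {j : ι} (hj : (Q j).Nonempty) (F : (ι → V) → M) :
    𝔼 w ∈ Fintype.piFinset Q, 𝔼 v ∈ Q j, F (Function.update w j v)
      = 𝔼 w ∈ Fintype.piFinset Q, F w := by
  have swap : 𝔼 x ∈ Fintype.piFinset Q ×ˢ Q j, F (Function.update x.1 j x.2)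
      = 𝔼 x ∈ Fintype.piFinset Q ×ˢ Q j, F x.1 := by
    have mem_swap : ∀ x ∈ Fintype.piFinset Q ×ˢ Q j,
        (Function.update x.1 j x.2, x.1 j) ∈ Fintype.piFinset Q ×ˢ Q j := by
      intro x hx
      rw [mem_product, Fintype.mem_piFinset] at hx ⊢
      exact ⟨fun i => by by_cases hi : i = j <;> simp [hi, hx.1, hx.2], hx.1 j⟩
    exact expect_nbij' (fun x => (Function.update x.1 j x.2, x.1 j))
      (fun x => (Function.update x.1 j x.2, x.1 j)) mem_swap mem_swap (by simp) (by simp)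
      (by simp)
  rw [expect_product, expect_product] at swap
  simpa only [expect_const hj] using swap

lemma expect_apply_apply {Q : ι → Finset V} (hQ : ∀ i, (Q i).Nonempty) {i j : ι} (hij : i ≠ j)
    (F : V → V → M) :
    𝔼 w ∈ Fintype.piFinset Q, F (w i) (w j) = 𝔼 u ∈ Q i, 𝔼 v ∈ Q j, F u v := by
  calc 𝔼 w ∈ Fintype.piFinset Q, F (w i) (w j)
      = 𝔼 w ∈ Fintype.piFinset Q, 𝔼 v ∈ Q j, F (w i) v := by
        rw [← expect_update (hQ j) fun w => F (w i) (w j)]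
        simp only [Function.update_self, Function.update_of_ne hij]
    _ = 𝔼 _w ∈ Fintype.piFinset Q, 𝔼 u ∈ Q i, 𝔼 v ∈ Q j, F u v := by
        rw [← expect_update (hQ i) fun w => 𝔼 v ∈ Q j, F (w i) v]
        simp only [Function.update_self]
    _ = 𝔼 u ∈ Q i, 𝔼 v ∈ Q j, F u v := expect_const (Fintype.piFinset_nonempty.2 hQ) _

lemma expect_update_univ [Fintype V] [Nonempty V] (j : ι) (F : (ι → V) → M) :
    𝔼 w : ι → V, 𝔼 v, F (Function.update w j v) = 𝔼 w : ι → V, F w := by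
  simpa only [Fintype.piFinset_univ] using expect_update (Q := fun _ => univ) univ_nonempty F

lemma expect_comp_injective {σ : Type*} [Fintype σ] [DecidableEq σ] [Fintype V] [Nonempty V]
    {I : σ → ι} (hI : Function.Injective I) (F : (σ → V) → M) :
    𝔼 x : ι → V, F (x ∘ I) = 𝔼 a, F a := by
  have swap : Function.Involutive
      (fun y : (ι → V) × (σ → V) => (Function.extend I y.2 y.1, y.1 ∘ I)) := by
    rintro ⟨x, a⟩
    refine Prod.ext (funext fun i => ?_) (funext fun s => hI.extend_apply _ _ s)
    by_cases hi : ∃ s, I s = i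
    · obtain ⟨s, rfl⟩ := hi
      exact hI.extend_apply _ _ _
    · simp only [Function.extend_apply' _ _ _ hi]
  have key := Fintype.expect_equiv swap.toPerm (fun y => F (y.1 ∘ I)) (fun y => F y.2)
    fun _ => rfl
  rw [← univ_product_univ, expect_product, expect_product] at key
  simpa only [expect_const univ_nonempty] using key

end Resampling

section RandomTuples

variable {ι V : Type*} [Fintype ι] [DecidableEq ι] [Fintype V]

lemma prob_forall_apply (p : V → Prop) :
    prob univ (fun z : ι → V => ∀ i, p (z i)) = prob univ p ^ Fintype.card ι := by
  have hpi : ({z : ι → V | ∀ i, p (z i)} : Finset _)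
      = Fintype.piFinset fun _ => ({v | p v} : Finset V) := by
    ext z; simp
  rw [prob_eq_card_div, prob_eq_card_div, hpi, Fintype.card_piFinset, prod_const, card_univ,
    card_univ, card_univ, Fintype.card_fun, div_pow]
  push_cast
  rfl

lemma prob_apply_eq_apply [Nonempty V] {i j : ι} (hij : i ≠ j) :
    prob univ (fun z : ι → V => z i = z j) = 1 / Fintype.card V := by
  have h := expect_apply_apply (Q := fun _ : ι => (univ : Finset V)) (fun _ => univ_nonempty) hij
    fun u v => if u = v then (1 : ℝ) else 0
  rw [Fintype.piFinset_univ] at h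
  rw [prob, h]
  simp [expect_eq_sum_div_card]

lemma prob_not_injective_le [Nonempty V] :
    prob univ (fun z : ι → V => ¬ Function.Injective z)
      ≤ (Fintype.card ι : ℝ) ^ 2 / Fintype.card V := by
  have collision (e : ι × ι) :
      prob univ (fun z : ι → V => e.1 ≠ e.2 ∧ z e.1 = z e.2) ≤ 1 / Fintype.card V := by
    by_cases he : e.1 = e.2
    · simp [prob, he]
    · exact (prob_mono fun _ _ h => h.2).trans_eq (prob_apply_eq_apply he)
  calc prob univ (fun z : ι → V => ¬ Function.Injective z)
      ≤ prob univ (fun z : ι → V => ∃ e : ι × ι, e.1 ≠ e.2 ∧ z e.1 = z e.2) :=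
        prob_mono fun z _ hz => by
          obtain ⟨i, j, hij, hne⟩ := Function.not_injective_iff.1 hz
          exact ⟨(i, j), hne, hij⟩
    _ ≤ Fintype.card (ι × ι) * (1 / Fintype.card V) := prob_exists_le_card_mul collision
    _ = (Fintype.card ι : ℝ) ^ 2 / Fintype.card V := by
        rw [Fintype.card_prod]; push_cast; ring

end RandomTuples

section Shattering

lemma exists_shatters_of_lt_card {α : Type*} [Fintype α] [Nonempty α] {𝒜 : Finset (Finset α)}
    {d : ℕ} (h : d * Fintype.card α ^ d < #𝒜) : ∃ s, 𝒜.Shatters s ∧ d ≤ #s := by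
  by_contra! hsmall
  have choose_le (i : ℕ) (hi : i ≤ d) : (Fintype.card α).choose i ≤ Fintype.card α ^ d :=
    (Nat.choose_le_pow _ i).trans (Nat.pow_le_pow_right Fintype.card_pos hi)
  have dim_lt : ∀ s ∈ 𝒜.shatterer, #s < d := fun s hs => hsmall s (mem_shatterer.1 hs)
  have hd : 0 < d := (Nat.zero_le _).trans_lt <| hsmall ∅ <| shatters_empty.2 <|
    card_pos.1 ((Nat.zero_le _).trans_lt h)
  have hdim : 𝒜.vcDim < d := (Finset.sup_lt_iff hd).2 dim_lt
  refine h.not_ge ?_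
  calc #𝒜 ≤ ∑ i ∈ Iic 𝒜.vcDim, (Fintype.card α).choose i :=
        (card_le_card_shatterer 𝒜).trans card_shatterer_le_sum_vcDim
    _ ≤ ∑ _i ∈ Iic 𝒜.vcDim, Fintype.card α ^ d :=
        sum_le_sum fun i hi => choose_le i ((mem_Iic.1 hi).trans hdim.le)
    _ = (𝒜.vcDim + 1) * Fintype.card α ^ d := by simp
    _ ≤ d * Fintype.card α ^ d := Nat.mul_le_mul_right _ hdim

lemma exists_forall_pattern {ι τ : Type*} [Fintype τ] [Nonempty τ] {R : ι → τ → Prop}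
    {N : Finset ι} (hN : ∀ i ∈ N, ∀ j ∈ N, i ≠ j → ∃ b, ¬ (R i b ↔ R j b)) {d : ℕ}
    (hd : d * Fintype.card τ ^ d < #N) :
    ∃ s : Finset τ, d ≤ #s ∧ ∀ P : τ → Prop, ∃ i, ∀ b ∈ s, R i b ↔ P b := by
  let row (i : ι) : Finset τ := {b | R i b}
  have row_injOn : Set.InjOn row N := by
    intro i hi j hj hij
    by_contra hne
    obtain ⟨b, hb⟩ := hN i hi j hj hne
    simp only [row, Finset.ext_iff, mem_filter_univ] at hij
    exact hb (hij b)
  rw [← card_image_of_injOn row_injOn] at hd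
  obtain ⟨s, hs, hds⟩ := exists_shatters_of_lt_card hd
  refine ⟨s, hds, fun P => ?_⟩
  obtain ⟨_, hu, hsu⟩ := hs (filter_subset P s)
  obtain ⟨i, -, rfl⟩ := mem_image.1 hu
  refine ⟨i, fun b hb => ?_⟩
  simpa [row, hb] using Finset.ext_iff.1 hsu b

variable {S T V W : Type*}

/-- The vertices `a s` and `b t` form a bipartite copy of `H` in `R`: the edges of `R` between the
`a s` and the `b t` are exactly those prescribed by `H`. No injectivity is required. -/
def IsCopy (H : S → T → Prop) (R : V → W → Prop) (a : S → V) (b : T → W) : Prop :=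
  ∀ s t, H s t ↔ R (a s) (b t)

lemma exists_injective_isCopy [Fintype S] [Fintype T] [Fintype W] [Nonempty W] (H : S → T → Prop)
    {R : V → W → Prop} {N : Finset V} (hN : ∀ u ∈ N, ∀ v ∈ N, u ≠ v → ∃ y, ¬ (R u y ↔ R v y))
    (hcard : (Fintype.card S + Fintype.card T) *
      Fintype.card W ^ (Fintype.card S + Fintype.card T) < #N) :
    ∃ a : S → V, ∃ b : T → W, Function.Injective a ∧ Function.Injective b ∧ IsCopy H R a b := by
  obtain ⟨s, hs, pattern⟩ := exists_forall_pattern hN hcard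
  obtain ⟨e⟩ : Nonempty (S ⊕ T ↪ s) := Function.Embedding.nonempty_of_card_le (by simpa using hs)
  -- The columns indexed by `S` carry the identity pattern, which forces `a` to be injective.
  have row (x : S) : ∃ v, ∀ c, R v (e c) ↔ Sum.elim (· = x) (H x) c := by
    obtain ⟨v, hv⟩ := pattern fun y => ∃ c, (e c : W) = y ∧ Sum.elim (· = x) (H x) c
    refine ⟨v, fun c => (hv _ (e c).2).trans ⟨?_, fun h => ⟨c, rfl, h⟩⟩⟩
    rintro ⟨c', hc', h⟩
    rwa [e.injective (Subtype.ext hc')] at h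
  choose a ha using row
  refine ⟨a, fun t => e (Sum.inr t), fun x x' hxx => ?_, fun t t' h => ?_, fun x t => ?_⟩
  · exact (ha x' (Sum.inl x)).1 (hxx ▸ (ha x (Sum.inl x)).2 rfl)
  · exact Sum.inr_injective (e.injective (Subtype.ext h))
  · exact (ha x (Sum.inr t)).symm

end Shattering

section Sampling

variable {S T V W ι τ : Type*} [Fintype W]

/-- The normalised Hamming distance between the neighbourhoods of `u` and `v` in the bipartite
graph `R`. -/
def nbhdDist (R : V → W → Prop) (u v : V) : ℝ := prob univ fun y => ¬ (R u y ↔ R v y)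

lemma nbhdDist_comm (R : V → W → Prop) (u v : V) : nbhdDist R u v = nbhdDist R v u := by
  simp only [nbhdDist, iff_comm]

lemma nbhdDist_triangle (R : V → W → Prop) (u v w : V) :
    nbhdDist R u w ≤ nbhdDist R u v + nbhdDist R v w :=
  (prob_mono fun _ _ h => by tauto).trans (prob_or_le _ _ _)

lemma prob_forall_iff_le [Nonempty W] [Fintype τ] [DecidableEq τ] {R : V → W → Prop} {ε : ℝ}
    {u v : V} (h : ε ≤ nbhdDist R u v) :
    prob univ (fun y : τ → W => ∀ b, R u (y b) ↔ R v (y b)) ≤ (1 - ε) ^ Fintype.card τ := by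
  rw [prob_forall_apply fun w => R u w ↔ R v w]
  refine pow_le_pow_left₀ (prob_nonneg _ _) ?_ _
  rw [nbhdDist, prob_not univ_nonempty] at h
  linarith

variable [Fintype V]

/-- The homomorphism density of induced bipartite copies of `H` in `R`: the probability that
uniformly random maps of the two sides of `H` form a copy. -/
def copyDensity [Fintype S] [DecidableEq S] [Fintype T] [DecidableEq T]
    (H : S → T → Prop) (R : V → W → Prop) : ℝ :=
  prob univ fun z : (S → V) × (T → W) => IsCopy H R z.1 z.2

lemma prob_univ_prod (p : V × W → Prop) : prob univ p = 𝔼 v, prob univ fun w => p (v, w) := by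
  rw [← univ_product_univ, prob_product]

lemma prob_exists_undistinguished_le [Nonempty V] [Nonempty W] [Fintype ι]
    [DecidableEq ι] [Fintype τ] [DecidableEq τ] (R : V → W → Prop) {ε : ℝ} (hε : ε ≤ 1) :
    prob univ (fun z : (ι → V) × (τ → W) => ∃ e : ι × ι,
        ε < nbhdDist R (z.1 e.1) (z.1 e.2) ∧ ∀ b, R (z.1 e.1) (z.2 b) ↔ R (z.1 e.2) (z.2 b))
      ≤ (Fintype.card ι : ℝ) ^ 2 * (1 - ε) ^ Fintype.card τ := by
  refine (prob_exists_le_card_mul (c := (1 - ε) ^ Fintype.card τ) fun e => ?_).trans_eq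
    (by rw [Fintype.card_prod]; push_cast; ring)
  rw [prob_univ_prod]
  refine expect_le univ_nonempty fun x _ => ?_
  by_cases hx : ε < nbhdDist R (x e.1) (x e.2)
  · exact (prob_mono fun _ _ h => h.2).trans (prob_forall_iff_le hx.le)
  · simp only [hx, false_and, prob, if_false, expect_const_zero]
    exact pow_nonneg (sub_nonneg.2 hε) _

variable [Fintype S] [DecidableEq S] [Fintype T] [DecidableEq T]

lemma prob_isCopy_comp [Nonempty V] [Nonempty W] [Fintype ι] [DecidableEq ι] [Fintype τ]
    [DecidableEq τ] (H : S → T → Prop) (R : V → W → Prop) {I : S → ι} {J : T → τ}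
    (hI : Function.Injective I) (hJ : Function.Injective J) :
    prob univ (fun z : (ι → V) × (τ → W) => IsCopy H R (z.1 ∘ I) (z.2 ∘ J))
      = copyDensity H R := by
  rw [copyDensity, prob_univ_prod, prob_univ_prod]
  simp only [prob]
  rw [expect_comp_injective hI fun a => 𝔼 y : τ → W, if IsCopy H R a (y ∘ J) then (1 : ℝ) else 0]
  exact expect_congr rfl fun a _ =>
    expect_comp_injective hJ fun b => if IsCopy H R a b then (1 : ℝ) else 0

lemma prob_exists_isCopy_comp_le [Nonempty V] [Nonempty W] [Fintype ι] [DecidableEq ι]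
    [Fintype τ] [DecidableEq τ] (H : S → T → Prop) (R : V → W → Prop) :
    prob univ (fun z : (ι → V) × (τ → W) => ∃ e : (S → ι) × (T → τ), Function.Injective e.1 ∧
        Function.Injective e.2 ∧ IsCopy H R (z.1 ∘ e.1) (z.2 ∘ e.2))
      ≤ (Fintype.card ι : ℝ) ^ Fintype.card S * (Fintype.card τ : ℝ) ^ Fintype.card T
        * copyDensity H R := by
  refine (prob_exists_le_card_mul (c := copyDensity H R) fun e => ?_).trans_eq
    (by rw [Fintype.card_prod, Fintype.card_fun, Fintype.card_fun]; push_cast; ring)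
  by_cases he : Function.Injective e.1 ∧ Function.Injective e.2
  · exact (prob_mono fun _ _ h => h.2.2).trans_eq (prob_isCopy_comp H R he.1 he.2)
  · refine le_of_eq_of_le (expect_eq_zero fun z _ => if_neg ?_) (prob_nonneg _ _)
    exact fun h => he ⟨h.1, h.2.1⟩

end Sampling

section Cover

variable {S T V W : Type*} [Fintype W] {M : ℕ}

/-- The indices `j` at which the sequence `x` brings a new neighbourhood, one at distance more
than `ε` from those of all earlier entries. -/
def newIndices (R : V → W → Prop) (ε : ℝ) (x : Fin M → V) : Finset (Fin M) :=
  {j | ∀ i < j, ε < nbhdDist R (x j) (x i)}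

lemma lt_nbhdDist_of_mem_newIndices {R : V → W → Prop} {ε : ℝ} {x : Fin M → V} {i j : Fin M}
    (hi : i ∈ newIndices R ε x) (hj : j ∈ newIndices R ε x) (hij : i ≠ j) :
    ε < nbhdDist R (x i) (x j) := by
  rw [newIndices, mem_filter_univ] at hi hj
  rcases hij.lt_or_gt with h | h
  · exact nbhdDist_comm R (x j) (x i) ▸ hj i h
  · exact hi j h

lemma card_newIndices_le [Fintype S] [Fintype T] {τ : Type*} [Fintype τ] [Nonempty τ]
    (H : S → T → Prop) {R : V → W → Prop} {ε : ℝ} {x : Fin M → V} {y : τ → W}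
    (hdist : ¬ ∃ e : Fin M × Fin M, ε < nbhdDist R (x e.1) (x e.2) ∧
      ∀ b, R (x e.1) (y b) ↔ R (x e.2) (y b))
    (hcopy : ¬ ∃ e : (S → Fin M) × (T → τ), Function.Injective e.1 ∧ Function.Injective e.2 ∧
      IsCopy H R (x ∘ e.1) (y ∘ e.2)) :
    #(newIndices R ε x) ≤ (Fintype.card S + Fintype.card T) *
      Fintype.card τ ^ (Fintype.card S + Fintype.card T) := by
  by_contra! hlt
  refine hcopy ?_
  obtain ⟨I, J, hI, hJ, hIJ⟩ := exists_injective_isCopy H (R := fun i b => R (x i) (y b))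
    (fun i hi j hj hij => by
      by_contra! hagree
      exact hdist ⟨(i, j), lt_nbhdDist_of_mem_newIndices hi hj hij, hagree⟩) hlt
  exact ⟨(I, J), hI, hJ, hIJ⟩

variable [Fintype V]

lemma mul_expect_prob_le_expect_card_newIndices [Nonempty V] (R : V → W → Prop) (ε : ℝ) :
    M * 𝔼 x : Fin M → V, prob univ (fun v => ∀ i, ε < nbhdDist R v (x i))
      ≤ 𝔼 x : Fin M → V, (#(newIndices R ε x) : ℝ) := by
  have new_ge (j : Fin M) : 𝔼 x : Fin M → V, prob univ (fun v => ∀ i, ε < nbhdDist R v (x i))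
      ≤ prob univ fun x : Fin M → V => ∀ i < j, ε < nbhdDist R (x j) (x i) := by
    refine le_of_le_of_eq ?_ (expect_update_univ j _)
    refine expect_le_expect fun x _ => prob_mono fun v _ hv i hi => ?_
    rw [Function.update_self, Function.update_of_ne hi.ne]
    exact hv i
  calc M * 𝔼 x : Fin M → V, prob univ (fun v => ∀ i, ε < nbhdDist R v (x i))
      = ∑ _j : Fin M, 𝔼 x : Fin M → V, prob univ (fun v => ∀ i, ε < nbhdDist R v (x i)) := by
        rw [sum_const, card_univ, Fintype.card_fin, nsmul_eq_mul]
    _ ≤ ∑ j, prob univ fun x : Fin M → V => ∀ i < j, ε < nbhdDist R (x j) (x i) :=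
        sum_le_sum fun j _ => new_ge j
    _ = 𝔼 x : Fin M → V, (#(newIndices R ε x) : ℝ) := by
        simp only [prob_eq_expect_ite]
        rw [← expect_sum_comm]
        simp only [newIndices, sum_boole]

variable [Fintype S] [DecidableEq S] [Fintype T] [DecidableEq T]

lemma expect_card_newIndices_le [Nonempty V] [Nonempty W] (H : S → T → Prop) (R : V → W → Prop)
    {ε : ℝ} (hε : ε ≤ 1) {t : ℕ} (ht : 0 < t) :
    𝔼 x : Fin M → V, (#(newIndices R ε x) : ℝ)
      ≤ ((Fintype.card S + Fintype.card T : ℕ) : ℝ) * (t : ℝ) ^ (Fintype.card S + Fintype.card T)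
        + M * ((M : ℝ) ^ 2 * (1 - ε) ^ t
          + (M : ℝ) ^ Fintype.card S * (t : ℝ) ^ Fintype.card T * copyDensity H R) := by
  have : Nonempty (Fin t) := ⟨⟨0, ht⟩⟩
  set d := Fintype.card S + Fintype.card T
  let agree (z : (Fin M → V) × (Fin t → W)) : Prop := ∃ e : Fin M × Fin M,
    ε < nbhdDist R (z.1 e.1) (z.1 e.2) ∧ ∀ b, R (z.1 e.1) (z.2 b) ↔ R (z.1 e.2) (z.2 b)
  let copy (z : (Fin M → V) × (Fin t → W)) : Prop := ∃ e : (S → Fin M) × (T → Fin t),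
    Function.Injective e.1 ∧ Function.Injective e.2 ∧ IsCopy H R (z.1 ∘ e.1) (z.2 ∘ e.2)
  have card_le (z : (Fin M → V) × (Fin t → W)) : (#(newIndices R ε z.1) : ℝ)
      ≤ d * (t : ℝ) ^ d + M * if agree z ∨ copy z then 1 else 0 := by
    split_ifs with hz
    · have h : (#(newIndices R ε z.1) : ℝ) ≤ M := by
        exact_mod_cast (card_le_univ _).trans_eq (Fintype.card_fin M)
      have : 0 ≤ (d : ℝ) * (t : ℝ) ^ d := by positivity
      linarith
    · have h := card_newIndices_le H (mt Or.inl hz) (mt Or.inr hz)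
      rw [Fintype.card_fin] at h
      rw [mul_zero, add_zero]
      exact_mod_cast h
  have hagree := prob_exists_undistinguished_le (ι := Fin M) (τ := Fin t) R hε
  have hcopy := prob_exists_isCopy_comp_le (ι := Fin M) (τ := Fin t) H R
  simp only [Fintype.card_fin] at hagree hcopy
  calc 𝔼 x : Fin M → V, (#(newIndices R ε x) : ℝ)
      = 𝔼 z : (Fin M → V) × (Fin t → W), (#(newIndices R ε z.1) : ℝ) := by
        rw [← univ_product_univ, expect_product]
        simp only [expect_const univ_nonempty]
    _ ≤ 𝔼 z, (d * (t : ℝ) ^ d + M * if agree z ∨ copy z then 1 else 0) :=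
        expect_le_expect fun z _ => card_le z
    _ = d * (t : ℝ) ^ d + M * prob univ (fun z => agree z ∨ copy z) := by
        rw [expect_add_distrib, expect_const univ_nonempty, ← mul_expect, prob_eq_expect_ite]
    _ ≤ _ := by
        gcongr
        exact (prob_or_le _ _ _).trans (add_le_add hagree hcopy)

lemma exists_cover [Nonempty V] [Nonempty W] (H : S → T → Prop) (R : V → W → Prop) {ε : ℝ}
    (hε : ε ≤ 1) {t : ℕ} (hM : 0 < M) (ht : 0 < t)
    (h : ((Fintype.card S + Fintype.card T : ℕ) : ℝ) * (t : ℝ) ^ (Fintype.card S + Fintype.card T)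
        + M * ((M : ℝ) ^ 2 * (1 - ε) ^ t
          + (M : ℝ) ^ Fintype.card S * (t : ℝ) ^ Fintype.card T * copyDensity H R) ≤ M * ε) :
    ∃ x : Fin M → V, prob univ (fun v => ∀ i, ε < nbhdDist R v (x i)) ≤ ε := by
  have hmean := le_of_mul_le_mul_left ((mul_expect_prob_le_expect_card_newIndices R ε).trans
    ((expect_card_newIndices_le H R hε ht).trans h)) (Nat.cast_pos.2 hM)
  obtain ⟨x, -, hx⟩ := exists_le_of_expect_le univ_nonempty hmean
  exact ⟨x, hx⟩

/-- The classes of `g` are clusters: outside an exceptional set of measure at most `ε`, vertices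
with the same label have neighbourhoods at distance at most `ε`. -/
def IsClustering {L : Type*} (R : V → W → Prop) (g : V → L) (ε : ℝ) : Prop :=
  ∃ E : Set V, prob univ (· ∈ E) ≤ ε ∧
    ∀ u ∉ E, ∀ v ∉ E, g u = g v → nbhdDist R u v ≤ ε

lemma exists_isClustering_of_cover (hM : 0 < M) {R : V → W → Prop} {ε : ℝ} {x : Fin M → V}
    (hx : prob univ (fun v => ∀ i, ε < nbhdDist R v (x i)) ≤ ε) :
    ∃ g : V → Fin M, IsClustering R g (2 * ε) := by
  have nearest (v : V) : ∃ j, (∃ i, nbhdDist R v (x i) ≤ ε) → nbhdDist R v (x j) ≤ ε := by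
    by_cases hv : ∃ i, nbhdDist R v (x i) ≤ ε
    · exact hv.imp fun _ hi _ => hi
    · exact ⟨⟨0, hM⟩, fun h => (hv h).elim⟩
  choose g hg using nearest
  refine ⟨g, {v | ∀ i, ε < nbhdDist R v (x i)}, ?_, fun u hu v hv huv => ?_⟩
  · exact hx.trans (by linarith [(prob_nonneg _ _).trans hx])
  · simp only [Set.mem_ofPred_eq, not_forall, not_lt] at hu hv
    calc nbhdDist R u v ≤ nbhdDist R u (x (g u)) + nbhdDist R (x (g u)) v :=
          nbhdDist_triangle R _ _ _
      _ ≤ ε + ε := add_le_add (hg u hu) (by rw [nbhdDist_comm, huv]; exact hg v hv)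
      _ = 2 * ε := (two_mul ε).symm

end Cover

section SampleSizes

lemma one_sub_pow_le {x : ℝ} (hx : 0 < x) (hx1 : x ≤ 1) {t : ℕ} (ht : 0 < t) (m : ℕ) :
    (1 - x) ^ t ≤ m.factorial / (t * x) ^ m := by
  have hexp : (t * x) ^ m / m.factorial ≤ Real.exp (t * x) :=
    Real.pow_div_factorial_le_exp _ (by positivity) m
  calc (1 - x) ^ t ≤ Real.exp (-x) ^ t :=
        pow_le_pow_left₀ (sub_nonneg.2 hx1) (Real.one_sub_le_exp_neg x) t
    _ = (Real.exp (t * x))⁻¹ := by rw [← Real.exp_nat_mul, ← Real.exp_neg, mul_neg]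
    _ ≤ ((t * x) ^ m / m.factorial)⁻¹ := inv_anti₀ (by positivity) hexp
    _ = m.factorial / (t * x) ^ m := inv_div _ _

lemma natCast_le_pow_self {N : ℕ} (hN : 2 ≤ N) (K : ℕ) : (K : ℝ) ≤ (N : ℝ) ^ K := by
  exact_mod_cast (Nat.lt_pow_self hN).le

lemma exists_pow_mul_one_sub_inv_pow_le (A b m : ℕ) (hm : b < m) :
    ∃ a : ℕ, ∀ N : ℕ, 2 ≤ N →
      A * (N : ℝ) ^ (a * b + 3) * (1 - 1 / (N : ℝ)) ^ N ^ a ≤ 1 := by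
  refine ⟨A * m.factorial + m + 3, fun N hN => ?_⟩
  set a := A * m.factorial + m + 3
  have hN0 : (0 : ℝ) < N := by positivity
  have hN1 : (1 : ℝ) ≤ N := by exact_mod_cast one_le_two.trans hN
  have decay : (1 - 1 / (N : ℝ)) ^ N ^ a ≤ m.factorial / ((N ^ a : ℕ) * (1 / (N : ℝ))) ^ m :=
    one_sub_pow_le (by positivity) ((div_le_one hN0).2 hN1) (by positivity) m
  have exponent : A * m.factorial + (a * b + 3) + m ≤ a * m := by
    have : a * (b + 1) ≤ a * m := Nat.mul_le_mul_left _ hm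
    lia
  calc A * (N : ℝ) ^ (a * b + 3) * (1 - 1 / (N : ℝ)) ^ N ^ a
      ≤ A * (N : ℝ) ^ (a * b + 3) * (m.factorial / ((N ^ a : ℕ) * (1 / (N : ℝ))) ^ m) := by
        gcongr
    _ = ((A * m.factorial : ℕ) : ℝ) * (N : ℝ) ^ (a * b + 3 + m) / (N : ℝ) ^ (a * m) := by
        push_cast
        rw [mul_pow, div_pow, one_pow, pow_add _ _ m, pow_mul]
        field_simp
    _ ≤ (N : ℝ) ^ (A * m.factorial) * (N : ℝ) ^ (a * b + 3 + m) / (N : ℝ) ^ (a * m) := by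
        gcongr
        exact natCast_le_pow_self hN _
    _ ≤ 1 := by
        rw [← pow_add, div_le_one (by positivity)]
        exact pow_le_pow_right₀ hN1 (by lia)

lemma exists_sample_sizes (k l : ℕ) : ∃ c : ℕ, ∀ N : ℕ, 2 ≤ N →
    ∃ M t : ℕ, 0 < M ∧ 0 < t ∧ M ≤ N ^ c ∧
      ((k + l : ℕ) : ℝ) * (t : ℝ) ^ (k + l) + M * ((M : ℝ) ^ 2 * (1 - 1 / (N : ℝ)) ^ t
        + (M : ℝ) ^ k * (t : ℝ) ^ l * (1 / (N : ℝ) ^ c)) ≤ M * (1 / (N : ℝ)) := by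
  set d := k + l
  obtain ⟨a, ha⟩ := exists_pow_mul_one_sub_inv_pow_le (27 * (d + 1) ^ 2) (2 * d) (2 * d + 1)
    (Nat.lt_succ_self _)
  set b := 3 * (d + 1) + (d * a + 1)
  refine ⟨b * (k + 1) + a * l + 3, fun N hN => ?_⟩
  have : (0 : ℝ) < N := by positivity
  obtain ⟨M, hM⟩ : ∃ M, M = 3 * (d + 1) * N ^ (d * a + 1) := ⟨_, rfl⟩
  have hMr : (M : ℝ) = 3 * (d + 1) * (N : ℝ) ^ (d * a + 1) := by rw [hM]; push_cast; rfl
  have hMb : M ≤ N ^ b := by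
    rw [hM, pow_add N (3 * (d + 1))]
    exact Nat.mul_le_mul_right _ (Nat.lt_pow_self hN).le
  have hcols : (d : ℝ) * ((N ^ a : ℕ) : ℝ) ^ d ≤ M * (1 / (3 * N)) :=
    calc (d : ℝ) * ((N ^ a : ℕ) : ℝ) ^ d = d * (N : ℝ) ^ (d * a) := by
          push_cast; rw [← pow_mul, mul_comm a]
      _ ≤ (d + 1) * (N : ℝ) ^ (d * a) := by gcongr; linarith
      _ = M * (1 / (3 * N)) := by rw [hMr, pow_succ]; field_simp
  have hpairs : (M : ℝ) ^ 2 * (1 - 1 / (N : ℝ)) ^ N ^ a ≤ 1 / (3 * N) := by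
    rw [le_div_iff₀ (by positivity)]
    refine le_of_eq_of_le ?_ (ha N hN)
    rw [hMr]; push_cast; ring
  have hcopies : (M : ℝ) ^ k * ((N ^ a : ℕ) : ℝ) ^ l * (1 / (N : ℝ) ^ (b * (k + 1) + a * l + 3))
      ≤ 1 / (3 * N) := by
    rw [mul_one_div, div_le_div_iff₀ (by positivity) (by positivity), one_mul]
    have h3 : 3 ≤ N ^ 2 := by nlinarith
    have hcopies' : M ^ k * (N ^ a) ^ l * (3 * N) ≤ N ^ (b * (k + 1) + a * l + 3) :=
      calc M ^ k * (N ^ a) ^ l * (3 * N) ≤ (N ^ b) ^ k * (N ^ a) ^ l * (N ^ 2 * N) := by gcongr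
        _ = N ^ (b * k + a * l + 3) := by ring
        _ ≤ N ^ (b * (k + 1) + a * l + 3) := Nat.pow_le_pow_right (by lia) (by lia)
    exact_mod_cast hcopies'
  refine ⟨M, N ^ a, by rw [hM]; positivity, by positivity,
    hMb.trans (Nat.pow_le_pow_right (by lia) (by lia)), ?_⟩
  calc (d : ℝ) * ((N ^ a : ℕ) : ℝ) ^ d + M * ((M : ℝ) ^ 2 * (1 - 1 / (N : ℝ)) ^ N ^ a
        + (M : ℝ) ^ k * ((N ^ a : ℕ) : ℝ) ^ l * (1 / (N : ℝ) ^ (b * (k + 1) + a * l + 3)))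
      ≤ M * (1 / (3 * N)) + M * (1 / (3 * N) + 1 / (3 * N)) := by gcongr
    _ = M * (1 / N) := by ring

end SampleSizes

section Clusters

lemma bipCopyCount_eq_card {k n : ℕ} (B : Fin k → Fin k → Prop) (G : SimpleGraph (Fin n)) :
    bipCopyCount B G = #{φ : Fin k ⊕ Fin k → Fin n | Function.Injective φ ∧
      ∀ s t, B s t ↔ G.Adj (φ (Sum.inl s)) (φ (Sum.inr t))} := by
  rw [bipCopyCount, Set.ncard_eq_toFinset_card']
  refine card_bij (fun φ _ => ⇑φ) (fun φ hφ => ?_) (fun φ _ ψ _ h => DFunLike.coe_injective h)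
    fun φ hφ => ?_
  · exact (mem_filter_univ _).2 ⟨φ.injective, Set.mem_toFinset.1 hφ⟩
  · rw [mem_filter_univ] at hφ
    exact ⟨⟨φ, hφ.1⟩, Set.mem_toFinset.2 hφ.2, rfl⟩

lemma copyDensity_le_bipCopyCount {k n : ℕ} (hn : 0 < n) (B : Fin k → Fin k → Prop)
    (G : SimpleGraph (Fin n)) :
    copyDensity B G.Adj ≤ bipCopyCount B G / (n : ℝ) ^ (2 * k) + (2 * k : ℝ) ^ 2 / n := by
  have : Nonempty (Fin n) := ⟨⟨0, hn⟩⟩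
  let copy (φ : Fin k ⊕ Fin k → Fin n) : Prop :=
    ∀ s t, B s t ↔ G.Adj (φ (Sum.inl s)) (φ (Sum.inr t))
  have count : prob univ (fun φ => Function.Injective φ ∧ copy φ)
      = bipCopyCount B G / (n : ℝ) ^ (2 * k) := by
    rw [prob_eq_card_div, ← bipCopyCount_eq_card, card_univ, Fintype.card_fun, Fintype.card_sum,
      Fintype.card_fin, Fintype.card_fin, ← two_mul]
    push_cast
    rfl
  have collisions : prob univ (fun φ : Fin k ⊕ Fin k → Fin n => ¬ Function.Injective φ)
      ≤ (2 * k : ℝ) ^ 2 / n := by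
    refine prob_not_injective_le.trans_eq ?_
    rw [Fintype.card_sum, Fintype.card_fin, Fintype.card_fin, ← two_mul]
    push_cast
    rfl
  calc copyDensity B G.Adj = prob univ copy :=
        (Fintype.expect_equiv (Equiv.sumArrowEquivProdArrow (Fin k) (Fin k) (Fin n)) _ _
          fun _ => rfl).symm
    _ ≤ prob univ (fun φ => (Function.Injective φ ∧ copy φ) ∨ ¬ Function.Injective φ) :=
        prob_mono fun φ _ hφ => by tauto
    _ ≤ prob univ (fun φ => Function.Injective φ ∧ copy φ)
          + prob univ (fun φ => ¬ Function.Injective φ) := prob_or_le _ _ _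
    _ ≤ _ := add_le_add count.le collisions

lemma copyDensity_le_of_bipCopyCount_le {k n P : ℕ} (hn : 0 < n) (hP : 0 < P)
    (hPn : 8 * k ^ 2 * P ≤ n) {B : Fin k → Fin k → Prop} {G : SimpleGraph (Fin n)}
    (hcount : (bipCopyCount B G : ℝ) ≤ (n : ℝ) ^ (2 * k) / (2 * P : ℕ)) :
    copyDensity B G.Adj ≤ 1 / P := by
  have hcopies : bipCopyCount B G / (n : ℝ) ^ (2 * k) ≤ 1 / (2 * P) := by
    rw [div_le_iff₀ (by positivity), div_mul_eq_mul_div, one_mul]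
    exact_mod_cast hcount
  have hcollisions : (2 * k : ℝ) ^ 2 / n ≤ 1 / (2 * P) := by
    rw [div_le_div_iff₀ (by positivity) (by positivity), one_mul]
    have : (2 * k) ^ 2 * (2 * P) ≤ n := by linarith
    exact_mod_cast this
  calc copyDensity B G.Adj
      ≤ bipCopyCount B G / (n : ℝ) ^ (2 * k) + (2 * k : ℝ) ^ 2 / n :=
        copyDensity_le_bipCopyCount hn B G
    _ ≤ 1 / (2 * P) + 1 / (2 * P) := add_le_add hcopies hcollisions
    _ = 1 / P := by ring

lemma IsClustering.of_comp {V W L L' : Type*} [Fintype V] [Fintype W] {R : V → W → Prop}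
    {f : V → L} {g : V → L'} {ε ε' : ℝ} (hf : IsClustering R f ε) (hε : ε ≤ ε')
    (hfg : ∀ u v, g u = g v → f u = f v) : IsClustering R g ε' := by
  obtain ⟨E, hE, hdist⟩ := hf
  exact ⟨E, hE.trans hε, fun u hu v hv huv => (hdist u hu v hv (hfg u v huv)).trans hε⟩

lemma exists_isClustering_or_copies (k : ℕ) : ∃ c : ℕ, ∀ N : ℕ, 2 ≤ N → ∃ n₀ : ℕ, ∀ n : ℕ,
    n₀ ≤ n → ∀ (B : Fin k → Fin k → Prop) (G : SimpleGraph (Fin n)),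
      (n : ℝ) ^ (2 * k) / (N : ℝ) ^ c ≤ bipCopyCount B G ∨
        ∃ g : Fin n → Fin (N ^ c), IsClustering G.Adj g (1 / N) := by
  obtain ⟨c, hc⟩ := exists_sample_sizes k k
  refine ⟨2 * c + 1, fun N hN => ⟨8 * k ^ 2 * (2 * N) ^ c + 1, fun n hn B G => ?_⟩⟩
  obtain ⟨M, t, hM, ht, hMN, hbound⟩ := hc (2 * N) (by lia)
  have hpow : 2 * (2 * N) ^ c ≤ N ^ (2 * c + 1) :=
    calc 2 * (2 * N) ^ c ≤ N * (N * N) ^ c := by gcongr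
      _ = N ^ (2 * c + 1) := by ring
  rw [or_iff_not_imp_left, not_le]
  intro hfew
  have hn0 : 0 < n := by lia
  have : Nonempty (Fin n) := ⟨⟨0, hn0⟩⟩
  have hdensity : copyDensity B G.Adj ≤ 1 / ((2 * N : ℕ) : ℝ) ^ c := by
    refine (copyDensity_le_of_bipCopyCount_le hn0 (P := (2 * N) ^ c) (by positivity) (by lia)
      (hfew.le.trans ?_)).trans_eq (by push_cast; rfl)
    gcongr
    exact_mod_cast hpow
  have hε : 1 / ((2 * N : ℕ) : ℝ) ≤ 1 := by
    rw [div_le_one (by positivity)]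
    exact_mod_cast (show 1 ≤ 2 * N by lia)
  obtain ⟨x, hx⟩ := exists_cover B G.Adj hε hM ht (by
    simp only [Fintype.card_fin]
    refine le_trans ?_ hbound
    gcongr)
  obtain ⟨g, hg⟩ := exists_isClustering_of_cover hM hx
  have hMc : M ≤ N ^ (2 * c + 1) :=
    hMN.trans ((Nat.le_mul_of_pos_left _ two_pos).trans hpow)
  refine ⟨fun v => Fin.castLE hMc (g v), hg.of_comp (le_of_eq ?_) fun u v huv => ?_⟩
  · push_cast
    field_simp
  · exact Fin.castLE_injective _ huv

end Clusters

section Averaging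

variable {V W L L' : Type*} [Fintype V]

/-- The class of the vertices that `g` labels with `a`. -/
def fiber (g : V → L) (a : L) : Finset V := {v | g v = a}

lemma mem_fiber {g : V → L} {a : L} {v : V} : v ∈ fiber g a ↔ g v = a := mem_filter_univ v

lemma fiber_nonempty (g : V → L) (v : V) : (fiber g (g v)).Nonempty := ⟨v, mem_fiber.2 rfl⟩

lemma expect_expect_fiber {g : V → L} {s : Finset V}
    (hs : ∀ u ∈ s, ∀ v, g u = g v → v ∈ s) (F : V → ℝ) :
    𝔼 u ∈ s, 𝔼 v ∈ fiber g (g u), F v = 𝔼 u ∈ s, F u := by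
  have swap : ∀ u v, u ∈ s ∧ v ∈ fiber g (g u) ↔ u ∈ fiber g (g v) ∧ v ∈ s := fun u v => by
    rw [mem_fiber, mem_fiber]
    exact ⟨fun h => ⟨h.2.symm, hs u h.1 v h.2.symm⟩, fun h => ⟨hs v h.2 u h.1.symm, h.1.symm⟩⟩
  simp only [expect_eq_sum_div_card, sum_div]
  rw [sum_comm' swap]
  refine sum_congr rfl fun v _ => ?_
  rw [← sum_div]
  congr 1
  rw [sum_congr rfl fun u hu => by rw [mem_fiber.1 hu], sum_const, nsmul_eq_mul]
  exact mul_div_cancel₀ _ (Nat.cast_ne_zero.2 (fiber_nonempty g v).card_ne_zero)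

lemma expect_expect_fiber_univ (g : V → L) (F : V → ℝ) :
    𝔼 u, 𝔼 v ∈ fiber g (g u), F v = 𝔼 u, F u :=
  expect_expect_fiber (fun _ _ v _ => mem_univ v) F

lemma IsClustering.expect_nbhdDist_le [Nonempty V] [Fintype W] {R : V → W → Prop} {g : V → L}
    {ε : ℝ} (hg : IsClustering R g ε) :
    𝔼 u, 𝔼 v ∈ fiber g (g u), nbhdDist R u v ≤ 3 * ε := by
  obtain ⟨E, hE, hdist⟩ := hg
  have hε : 0 ≤ ε := (prob_nonneg _ _).trans hE
  let e (v : V) : ℝ := if v ∈ E then 1 else 0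
  have he (v : V) : 0 ≤ e v := by simp only [e]; split_ifs <;> norm_num
  have dist_le (u v : V) (hv : v ∈ fiber g (g u)) : nbhdDist R u v ≤ ε + e u + e v := by
    by_cases huv : u ∉ E ∧ v ∉ E
    · linarith [hdist u huv.1 v huv.2 (mem_fiber.1 hv).symm, he u, he v]
    · have : 1 ≤ e u + e v := by
        by_cases hu : u ∈ E
        · have : e u = 1 := if_pos hu
          linarith [he v]
        · have hvE : v ∈ E := by_contra fun hvE => huv ⟨hu, hvE⟩
          have : e v = 1 := if_pos hvE
          linarith [he u]
      linarith [prob_le_one univ fun y => ¬ (R u y ↔ R v y), nbhdDist.eq_1 R u v]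
  calc 𝔼 u, 𝔼 v ∈ fiber g (g u), nbhdDist R u v
      ≤ 𝔼 u, 𝔼 v ∈ fiber g (g u), (ε + e u + e v) :=
        expect_le_expect fun u _ => expect_le_expect fun v hv => dist_le u v hv
    _ = ε + 𝔼 u, e u + 𝔼 u, e u := by
        simp only [expect_add_distrib, expect_const (fiber_nonempty _ _), expect_expect_fiber_univ,
          expect_const univ_nonempty]
    _ ≤ 3 * ε := by linarith [show 𝔼 u, e u ≤ ε from hE]

lemma IsClustering.expect_disagreement_le [Nonempty V] [Fintype W] {R : V → W → Prop} {g : V → L}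
    {ε : ℝ} (hg : IsClustering R g ε) (f : W → L') :
    𝔼 u, 𝔼 v, 𝔼 x ∈ fiber g (g u), 𝔼 x' ∈ fiber g (g u),
      prob (fiber f (f v)) (fun y => ¬ (R x y ↔ R x' y)) ≤ 3 * ε := by
  refine le_of_eq_of_le ?_ hg.expect_nbhdDist_le
  calc 𝔼 u, 𝔼 v, 𝔼 x ∈ fiber g (g u), 𝔼 x' ∈ fiber g (g u),
        prob (fiber f (f v)) (fun y => ¬ (R x y ↔ R x' y))
      = 𝔼 u, 𝔼 x ∈ fiber g (g u), 𝔼 x' ∈ fiber g (g u), nbhdDist R x x' := by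
        refine expect_congr rfl fun u _ => ?_
        rw [expect_comm]
        refine expect_congr rfl fun x _ => ?_
        rw [expect_comm]
        exact expect_congr rfl fun x' _ => expect_expect_fiber_univ f _
    _ = 𝔼 u, 𝔼 x ∈ fiber g (g u), 𝔼 x' ∈ fiber g (g x), nbhdDist R x x' :=
        expect_congr rfl fun u _ => expect_congr rfl fun x hx => by rw [mem_fiber.1 hx]
    _ = 𝔼 u, 𝔼 v ∈ fiber g (g u), nbhdDist R u v := expect_expect_fiber_univ g _

end Averaging

section Homogeneity

lemma prob_product_and {α β : Type*} (s : Finset α) (t : Finset β) (p : α → Prop)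
    (q : β → Prop) : prob (s ×ˢ t) (fun e => p e.1 ∧ q e.2) = prob s p * prob t q := by
  rw [prob_product, prob, expect_mul]
  refine expect_congr rfl fun a _ => ?_
  by_cases ha : p a <;> simp [prob, ha]

lemma prob_const {α : Type*} {s : Finset α} (hs : s.Nonempty) (p : Prop) :
    prob s (fun _ => p) = if p then 1 else 0 := expect_const hs _

lemma prob_mul_one_sub_prob_le {V W : Type*} {X : Finset V} {Y : Finset W} (hX : X.Nonempty)
    (hY : Y.Nonempty) (R : V → W → Prop) :
    prob (X ×ˢ Y) (fun e => R e.1 e.2) * (1 - prob (X ×ˢ Y) fun e => R e.1 e.2)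
      ≤ (𝔼 x ∈ X, 𝔼 x' ∈ X, prob Y fun y => ¬ (R x y ↔ R x' y))
        + 𝔼 y ∈ Y, 𝔼 y' ∈ Y, prob X fun x => ¬ (R x y ↔ R x y') := by
  rw [← prob_not (hX.product hY), ← prob_product_and]
  calc prob ((X ×ˢ Y) ×ˢ X ×ˢ Y) (fun e => R e.1.1 e.1.2 ∧ ¬ R e.2.1 e.2.2)
      ≤ prob ((X ×ˢ Y) ×ˢ X ×ˢ Y) (fun e => ¬ (R e.1.1 e.1.2 ↔ R e.2.1 e.1.2)
          ∨ ¬ (R e.2.1 e.1.2 ↔ R e.2.1 e.2.2)) := prob_mono fun e _ he => by tauto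
    _ ≤ prob ((X ×ˢ Y) ×ˢ X ×ˢ Y) (fun e => ¬ (R e.1.1 e.1.2 ↔ R e.2.1 e.1.2))
          + prob ((X ×ˢ Y) ×ˢ X ×ˢ Y) (fun e => ¬ (R e.2.1 e.1.2 ↔ R e.2.1 e.2.2)) :=
        prob_or_le _ _ _
    _ = _ := by
        simp only [prob_product, expect_product, prob_const hY, expect_const hX]
        congr 1
        · exact expect_congr rfl fun x _ => expect_comm _ _ _
        · exact expect_congr rfl fun y _ => expect_comm _ _ _

variable {n : ℕ} (G : SimpleGraph (Fin n))

lemma dens_eq_prob (X Y : Finset (Fin n)) :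
    dens G X Y = prob (X ×ˢ Y) fun e => G.Adj e.1 e.2 := by
  rw [prob_eq_card_div, _root_.dens, SimpleGraph.edgeDensity_def, card_product]
  push_cast
  rfl

variable {G}

lemma half_le_dens_mul_one_sub_dens {γ : ℝ} (hγ0 : 0 ≤ γ) (hγ : γ ≤ 1 / 2) {X Y : Finset (Fin n)}
    (h : ¬ HomPair G γ X Y) : γ / 2 ≤ dens G X Y * (1 - dens G X Y) := by
  rw [HomPair, not_or, not_le, not_le] at h
  nlinarith [mul_pos (sub_pos.2 h.1) (sub_pos.2 h.2)]

lemma IsClustering.expect_dens_mul_one_sub_dens_le [Nonempty (Fin n)] {L : Type*}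
    {g : Fin n → L} {ε : ℝ} (hg : IsClustering G.Adj g ε) :
    𝔼 u, 𝔼 v, dens G (fiber g (g u)) (fiber g (g v)) * (1 - dens G (fiber g (g u)) (fiber g (g v)))
      ≤ 6 * ε := by
  have left := hg.expect_disagreement_le g
  have right : 𝔼 u, 𝔼 v, 𝔼 y ∈ fiber g (g v), 𝔼 y' ∈ fiber g (g v),
      prob (fiber g (g u)) (fun x => ¬ (G.Adj x y ↔ G.Adj x y')) ≤ 3 * ε := by
    rw [expect_comm]
    simpa only [G.adj_comm] using left
  calc _ ≤ 𝔼 u, 𝔼 v, ((𝔼 x ∈ fiber g (g u), 𝔼 x' ∈ fiber g (g u),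
          prob (fiber g (g v)) fun y => ¬ (G.Adj x y ↔ G.Adj x' y))
        + 𝔼 y ∈ fiber g (g v), 𝔼 y' ∈ fiber g (g v),
          prob (fiber g (g u)) fun x => ¬ (G.Adj x y ↔ G.Adj x y')) :=
        expect_le_expect fun u _ => expect_le_expect fun v _ => by
          rw [dens_eq_prob]
          exact prob_mul_one_sub_prob_le (fiber_nonempty g u) (fiber_nonempty g v) G.Adj
    _ ≤ 6 * ε := by
        simp only [expect_add_distrib]
        linarith

lemma IsClustering.prob_not_homPair_le [Nonempty (Fin n)] {L : Type*} {g : Fin n → L} {ε γ : ℝ}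
    (hg : IsClustering G.Adj g ε) (hγ0 : 0 < γ) (hγ : γ ≤ 1 / 2) :
    prob univ (fun e : Fin n × Fin n => ¬ HomPair G γ (fiber g (g e.1)) (fiber g (g e.2)))
      ≤ 12 * ε / γ := by
  have markov : γ / 2 * prob univ (fun e : Fin n × Fin n =>
      ¬ HomPair G γ (fiber g (g e.1)) (fiber g (g e.2))) ≤ 6 * ε := by
    refine le_trans (mul_prob_le_expect (fun e _ => ?_)
      fun e _ he => half_le_dens_mul_one_sub_dens hγ0.le hγ he)
      (le_of_eq_of_le ?_ hg.expect_dens_mul_one_sub_dens_le)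
    · rw [dens_eq_prob]
      exact mul_nonneg (prob_nonneg _ _) (sub_nonneg.2 (prob_le_one _ _))
    · rw [← univ_product_univ, expect_product]
  rw [le_div_iff₀ hγ0]
  linarith

end Homogeneity

section Equitable

variable {V W L : Type*} [Fintype V]

lemma exists_labelling {q : ℕ} (P : Finpartition (univ : Finset V)) (hq : #P.parts = q) :
    ∃ g : V → Fin q, ∀ i, fiber g i ∈ P.parts := by
  let e := equivFinOfCardEq hq
  refine ⟨fun v => e ⟨P.part v, P.part_mem.2 (mem_univ v)⟩, fun i => ?_⟩
  convert (e.symm i).2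
  ext v
  rw [mem_fiber, ← Equiv.eq_symm_apply, Subtype.ext_iff]
  exact ⟨fun h => h ▸ P.mem_part (mem_univ v), fun h => P.part_eq_of_mem (e.symm i).2 h⟩

lemma fiber_mem_parts_ofSetoid (f : V → L) (v : V) :
    fiber f (f v) ∈ (Finpartition.ofSetoid (Setoid.ker f)).parts := by
  convert (Finpartition.ofSetoid (Setoid.ker f)).part_mem.2 (mem_univ v)
  ext u
  rw [mem_fiber, Finpartition.mem_part_ofSetoid_iff_rel, Setoid.ker_def, eq_comm]

lemma exists_equitable_labelling [Fintype L] {q : ℕ} (hq : 0 < q) (hqV : q ≤ Fintype.card V)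
    (f : V → L) :
    ∃ g : V → Fin q,
      (∀ i, #(fiber g i) = Fintype.card V / q ∨ #(fiber g i) = Fintype.card V / q + 1) ∧
      #{u | ¬ fiber g (g u) ⊆ fiber f (f u)} ≤ Fintype.card L * (Fintype.card V / q) := by
  set m := Fintype.card V / q
  have hm : m ≠ 0 := (Nat.div_pos hqV hq).ne'
  have hmod : Fintype.card V % q ≤ q := (Nat.mod_lt _ hq).le
  have hsizes : (q - Fintype.card V % q) * m + Fintype.card V % q * (m + 1)
      = #(univ : Finset V) := by
    rw [mul_add_one, ← add_assoc, ← add_mul, Nat.sub_add_cancel hmod, card_univ]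
    exact Nat.div_add_mod _ q
  let P := Finpartition.ofSetoid (Setoid.ker f)
  obtain ⟨g, hg⟩ := exists_labelling (q := q) (P.equitabilise hsizes)
    (by rw [P.card_parts_equitabilise hsizes hm, Nat.sub_add_cancel hmod])
  refine ⟨g, fun i => Finpartition.card_eq_of_mem_parts_equitabilise (hg i), ?_⟩
  let leftover (a : L) : Finset V :=
    fiber f a \ {y ∈ (P.equitabilise hsizes).parts | y ⊆ fiber f a}.biUnion id
  have card_leftover (a : L) : #(leftover a) ≤ m := by
    by_cases ha : ∃ v, f v = a
    · obtain ⟨v, rfl⟩ := ha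
      convert P.card_parts_equitabilise_subset_le hsizes (fiber_mem_parts_ofSetoid f v)
    · have : fiber f a = ∅ := eq_empty_of_forall_notMem fun v hv => ha ⟨v, mem_fiber.1 hv⟩
      simp only [leftover, this, empty_sdiff, card_empty, zero_le]
  refine (card_le_card (t := univ.biUnion leftover) fun u hu => ?_).trans
    (card_biUnion_le_card_mul _ _ m fun a _ => card_leftover a)
  simp only [leftover, mem_biUnion, mem_sdiff, mem_filter, id, not_exists, not_and, mem_univ,
    true_and] at hu ⊢
  refine ⟨f u, mem_fiber.2 rfl, fun y hy hyu => hu ?_⟩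
  have : fiber g (g u) = y := (P.equitabilise hsizes).eq_of_mem_parts (hg _) hy.1
    (mem_fiber.2 rfl) hyu
  exact this ▸ hy.2

lemma IsClustering.exists_equitable [Fintype W] {R : V → W → Prop} {q s : ℕ} {ε : ℝ}
    {f : V → Fin s} (hf : IsClustering R f ε) (hq : 0 < q) (hqV : q ≤ Fintype.card V)
    (hs : s ≤ ε * q) :
    ∃ g : V → Fin q,
      (∀ i, #(fiber g i) = Fintype.card V / q ∨ #(fiber g i) = Fintype.card V / q + 1) ∧
      IsClustering R g (2 * ε) := by
  obtain ⟨g, hsize, hmixed⟩ := exists_equitable_labelling hq hqV f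
  obtain ⟨E, hE, hdist⟩ := hf
  have hV : 0 < Fintype.card V := hq.trans_le hqV
  have hε : 0 ≤ ε := (prob_nonneg _ _).trans hE
  have prob_mixed : prob univ (fun u => ¬ fiber g (g u) ⊆ fiber f (f u)) ≤ ε := by
    rw [prob_eq_card_div, card_univ, div_le_iff₀ (by exact_mod_cast hV)]
    calc ((#{u | ¬ fiber g (g u) ⊆ fiber f (f u)} : ℕ) : ℝ)
        ≤ s * (Fintype.card V / q : ℕ) := by
          exact_mod_cast hmixed.trans_eq (by rw [Fintype.card_fin])
      _ ≤ ε * q * (Fintype.card V / q : ℕ) := by gcongr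
      _ = ε * (q * (Fintype.card V / q) : ℕ) := by push_cast; ring
      _ ≤ ε * Fintype.card V := by
          gcongr
          exact Nat.mul_div_le _ _
  refine ⟨g, hsize, {u | u ∈ E ∨ ¬ fiber g (g u) ⊆ fiber f (f u)}, ?_, fun u hu v hv huv => ?_⟩
  · exact (prob_or_le _ _ _).trans (by linarith)
  · rw [Set.mem_ofPred_eq, not_or, not_not] at hu hv
    have : f v = f u := mem_fiber.1 (hu.2 (mem_fiber.2 huv.symm))
    exact (hdist u hu.1 v hv.1 this.symm).trans (by linarith)

end Equitable

section Transversal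

variable {ι V : Type*} [Fintype ι] {Q : ι → Finset V}

lemma expect_card_offDiag_le [DecidableEq ι] (hQ : ∀ i, (Q i).Nonempty)
    {P : ι → ι → V → V → Prop} [∀ i j, DecidableRel (P i j)] {c : ℝ} (hc : 0 ≤ c)
    (hP : ∀ i j, i ≠ j → prob (Q i ×ˢ Q j) (fun e => P i j e.1 e.2) ≤ c) :
    𝔼 w ∈ Fintype.piFinset Q, (#{p ∈ univ.offDiag | P p.1 p.2 (w p.1) (w p.2)} : ℝ)
      ≤ (Fintype.card ι : ℝ) ^ 2 * c := by
  have pair_le (p : ι × ι) (hp : p ∈ univ.offDiag) :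
      𝔼 w ∈ Fintype.piFinset Q, (if P p.1 p.2 (w p.1) (w p.2) then (1 : ℝ) else 0) ≤ c := by
    have hne : p.1 ≠ p.2 := (mem_offDiag.1 hp).2.2
    rw [expect_apply_apply hQ hne fun u v => if P p.1 p.2 u v then (1 : ℝ) else 0]
    refine le_of_eq_of_le ?_ (hP p.1 p.2 hne)
    rw [prob_eq_expect_ite, expect_product]
  calc 𝔼 w ∈ Fintype.piFinset Q, (#{p ∈ univ.offDiag | P p.1 p.2 (w p.1) (w p.2)} : ℝ)
      = ∑ p ∈ univ.offDiag, 𝔼 w ∈ Fintype.piFinset Q,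
          if P p.1 p.2 (w p.1) (w p.2) then (1 : ℝ) else 0 := by
        rw [← expect_sum_comm]
        simp only [sum_boole]
    _ ≤ #(univ.offDiag : Finset (ι × ι)) * c :=
        (sum_le_card_nsmul _ _ c pair_le).trans_eq (nsmul_eq_mul _ _)
    _ ≤ (Fintype.card ι : ℝ) ^ 2 * c := by
        gcongr
        rw [offDiag_card, card_univ, sq]
        exact_mod_cast Nat.sub_le _ _

lemma exists_transversal [Nonempty ι] (hQ : ∀ i, (Q i).Nonempty)
    {P P' : ι → ι → V → V → Prop} [∀ i j, DecidableRel (P' i j)] {c c' : ℝ}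
    (hP : ∀ i j, i ≠ j → prob (Q i ×ˢ Q j) (fun e => P i j e.1 e.2) ≤ c)
    (hP' : ∀ i j, i ≠ j → prob (Q i ×ˢ Q j) (fun e => P' i j e.1 e.2) ≤ c')
    (hc0 : 0 ≤ c) (hc : 2 * (Fintype.card ι : ℝ) ^ 2 * c < 1) (hc' : 0 < c') :
    ∃ w : ι → V, (∀ i, w i ∈ Q i) ∧ (∀ i j, i ≠ j → ¬ P i j (w i) (w j)) ∧
      (#{p ∈ univ.offDiag | P' p.1 p.2 (w p.1) (w p.2)} : ℝ)
        ≤ 2 * c' * (Fintype.card ι : ℝ) ^ 2 := by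
  set q : ℝ := (Fintype.card ι : ℝ) with hq
  have hK : 0 < 2 * c' * q ^ 2 := by positivity
  have mean : 𝔼 w ∈ Fintype.piFinset Q,
      ((#{p ∈ univ.offDiag | P' p.1 p.2 (w p.1) (w p.2)} : ℝ)
        + 2 * c' * q ^ 2 * (#{p ∈ univ.offDiag | P p.1 p.2 (w p.1) (w p.2)} : ℝ))
      ≤ q ^ 2 * c' + 2 * c' * q ^ 2 * (q ^ 2 * c) := by
    rw [expect_add_distrib, ← mul_expect]
    exact add_le_add (expect_card_offDiag_le (P := P') hQ hc'.le hP')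
      (mul_le_mul_of_nonneg_left (expect_card_offDiag_le (P := P) hQ hc0 hP) hK.le)
  obtain ⟨w, hw, hle⟩ := exists_le_of_expect_le (Fintype.piFinset_nonempty.2 hQ) mean
  have hlt : q ^ 2 * c' + 2 * c' * q ^ 2 * (q ^ 2 * c) < 2 * c' * q ^ 2 := by nlinarith
  refine ⟨w, Fintype.mem_piFinset.1 hw, fun i j hij hbad => ?_, ?_⟩
  · have : 1 ≤ #{p ∈ univ.offDiag | P p.1 p.2 (w p.1) (w p.2)} :=
      card_pos.2 ⟨(i, j), mem_filter.2 ⟨mem_offDiag.2 ⟨mem_univ i, mem_univ j, hij⟩, hbad⟩⟩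
    have : (1 : ℝ) ≤ #{p ∈ univ.offDiag | P p.1 p.2 (w p.1) (w p.2)} := by exact_mod_cast this
    nlinarith [Nat.cast_nonneg (α := ℝ) #{p ∈ univ.offDiag | P' p.1 p.2 (w p.1) (w p.2)}]
  · have : 0 ≤ 2 * c' * q ^ 2 * (#{p ∈ univ.offDiag | P p.1 p.2 (w p.1) (w p.2)} : ℝ) := by
      positivity
    linarith

end Transversal

section Mismatch

lemma prob_le_mul_prob_of_subset {α : Type*} {s t : Finset α} {c : ℝ} (hst : s ⊆ t)
    (hs : s.Nonempty) (hc : #t ≤ c * #s) (p : α → Prop) : prob s p ≤ c * prob t p := by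
  have hs0 : (0 : ℝ) < #s := Nat.cast_pos.2 hs.card_pos
  have ht0 : (0 : ℝ) < #t := Nat.cast_pos.2 (hs.mono hst).card_pos
  rw [prob_eq_card_div, prob_eq_card_div, ← mul_div_assoc, div_le_div_iff₀ hs0 ht0]
  calc (#{a ∈ s | p a} : ℝ) * #t ≤ #{a ∈ t | p a} * (c * #s) := by gcongr
    _ = c * #{a ∈ t | p a} * #s := by ring

variable {V L : Type*} [Fintype V]

lemma prob_fiber_product_le {g : V → L} {c : ℝ} {a b : L}
    (ha : Fintype.card V ≤ c * #(fiber g a)) (hb : Fintype.card V ≤ c * #(fiber g b))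
    (hne : (fiber g a ×ˢ fiber g b).Nonempty) (p : V × V → Prop) :
    prob (fiber g a ×ˢ fiber g b) p ≤ c ^ 2 * prob univ p := by
  refine prob_le_mul_prob_of_subset (subset_univ _) hne ?_ p
  rw [card_univ, Fintype.card_prod, card_product]
  push_cast
  calc (Fintype.card V : ℝ) * Fintype.card V
      ≤ (c * #(fiber g a)) * (c * #(fiber g b)) :=
        mul_le_mul ha hb (Nat.cast_nonneg _) ((Nat.cast_nonneg _).trans ha)
    _ = c ^ 2 * (#(fiber g a) * #(fiber g b)) := by ring

lemma card_pairs_le [Fintype L] [Nonempty V] {g : V → L} {c : ℝ}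
    (hc : ∀ a, Fintype.card V ≤ c * #(fiber g a)) (P : L → L → Prop) [DecidableRel P] :
    (#{p : L × L | P p.1 p.2} : ℝ) ≤ c ^ 2 * prob univ fun e : V × V => P (g e.1) (g e.2) := by
  have fibers (p : L × L) (hp : p ∈ ({p | P p.1 p.2} : Finset (L × L))) :
      (Fintype.card V : ℝ) ^ 2
        ≤ c ^ 2 * #{e ∈ ({e | P (g e.1) (g e.2)} : Finset (V × V)) | (g e.1, g e.2) = p} := by
    have hsub : fiber g p.1 ×ˢ fiber g p.2
        ⊆ {e ∈ ({e | P (g e.1) (g e.2)} : Finset (V × V)) | (g e.1, g e.2) = p} := fun e he => by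
      obtain ⟨h₁, h₂⟩ := mem_product.1 he
      rw [mem_fiber] at h₁ h₂
      rw [mem_filter, mem_filter_univ, h₁, h₂]
      exact ⟨(mem_filter_univ p).1 hp, rfl⟩
    calc (Fintype.card V : ℝ) ^ 2 ≤ (c * #(fiber g p.1)) * (c * #(fiber g p.2)) := by
          rw [sq]
          exact mul_le_mul (hc _) (hc _) (Nat.cast_nonneg _) ((Nat.cast_nonneg _).trans (hc _))
      _ = c ^ 2 * #(fiber g p.1 ×ˢ fiber g p.2) := by rw [card_product]; push_cast; ring
      _ ≤ _ := by gcongr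
  have : (0 : ℝ) < Fintype.card V := Nat.cast_pos.2 Fintype.card_pos
  rw [prob_eq_card_div, card_univ, Fintype.card_prod, ← mul_div_assoc, Nat.cast_mul, ← sq,
    le_div_iff₀ (by positivity)]
  calc (#{p : L × L | P p.1 p.2} : ℝ) * (Fintype.card V : ℝ) ^ 2
      ≤ ∑ p : L × L with P p.1 p.2,
          c ^ 2 * (#{e ∈ ({e | P (g e.1) (g e.2)} : Finset (V × V)) | (g e.1, g e.2) = p} : ℝ) := by
        rw [← nsmul_eq_mul]
        exact card_nsmul_le_sum _ _ _ fibers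
    _ = c ^ 2 * #{e : V × V | P (g e.1) (g e.2)} := by
        rw [← mul_sum, card_eq_sum_card_fiberwise (f := fun e : V × V => (g e.1, g e.2))
          (t := {p : L × L | P p.1 p.2}) fun e he => by simpa using he]
        push_cast
        rfl

lemma prob_card_fiber_lt_le [Fintype L] (g : V → L) (s : Finset V) {t : ℝ} (ht : 0 ≤ t) :
    prob s (fun u => (#(fiber g (g u)) : ℝ) < t) ≤ Fintype.card L * (t / #s) := by
  refine (prob_mono (q := fun u => ∃ a, u ∈ fiber g a ∧ (#(fiber g a) : ℝ) < t)
    fun u _ hu => ⟨g u, mem_fiber.2 rfl, hu⟩).trans (prob_exists_le_card_mul fun a => ?_)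
  by_cases ha : (#(fiber g a) : ℝ) < t
  · rw [prob_eq_card_div]
    gcongr
    refine le_trans ?_ ha.le
    exact Nat.cast_le.2 (card_le_card fun u hu => (mem_filter.1 hu).2.1)
  · simp only [ha, and_false, prob, if_false, expect_const_zero]
    positivity

variable {n : ℕ} {G : SimpleGraph (Fin n)} {g : Fin n → L} {X Y : Finset (Fin n)}

lemma HomPair.mono {δ δ' : ℝ} (h : HomPair G δ X Y) (hδ : δ ≤ δ') : HomPair G δ' X Y :=
  h.imp (fun h => by linarith) fun h => h.trans hδ

lemma expect_dens_fiber (hX : ∀ u ∈ X, ∀ v, g u = g v → v ∈ X)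
    (hY : ∀ u ∈ Y, ∀ v, g u = g v → v ∈ Y) :
    𝔼 e ∈ X ×ˢ Y, dens G (fiber g (g e.1)) (fiber g (g e.2)) = dens G X Y := by
  simp only [dens_eq_prob, prob_product, expect_product]
  calc 𝔼 u ∈ X, 𝔼 v ∈ Y, 𝔼 x ∈ fiber g (g u), prob (fiber g (g v)) (fun y => G.Adj x y)
      = 𝔼 u ∈ X, 𝔼 x ∈ fiber g (g u), prob Y (fun y => G.Adj x y) := by
        refine expect_congr rfl fun u _ => ?_
        rw [expect_comm]
        exact expect_congr rfl fun x _ => expect_expect_fiber hY _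
    _ = 𝔼 u ∈ X, prob Y (fun y => G.Adj u y) := expect_expect_fiber hX _

lemma HomPair.prob_domOne_fiber_ne_le {η : ℝ} (h : HomPair G η X Y) (hη : η < 1 / 2)
    (hX0 : X.Nonempty) (hY0 : Y.Nonempty) (hX : ∀ u ∈ X, ∀ v, g u = g v → v ∈ X)
    (hY : ∀ u ∈ Y, ∀ v, g u = g v → v ∈ Y) :
    prob (X ×ˢ Y) (fun e => ¬ (DomOne G (fiber g (g e.1)) (fiber g (g e.2)) ↔ DomOne G X Y))
      ≤ 2 * η := by
  have dens_nonneg (A B : Finset (Fin n)) : 0 ≤ dens G A B := by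
    rw [dens_eq_prob]; exact prob_nonneg _ _
  have dens_le_one (A B : Finset (Fin n)) : dens G A B ≤ 1 := by
    rw [dens_eq_prob]; exact prob_le_one _ _
  by_cases hdom : DomOne G X Y
  · have hd : 1 - η ≤ dens G X Y := h.resolve_right fun h => by rw [DomOne] at hdom; linarith
    have markov := mul_prob_le_expect (s := X ×ˢ Y) (c := 1 / 2)
      (F := fun e => 1 - dens G (fiber g (g e.1)) (fiber g (g e.2)))
      (p := fun e => ¬ (DomOne G (fiber g (g e.1)) (fiber g (g e.2)) ↔ DomOne G X Y))
      (fun e _ => sub_nonneg.2 (dens_le_one _ _))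
      (fun e _ he => by
        simp only [hdom, iff_true] at he
        linarith [not_le.1 he])
    rw [expect_sub_distrib, expect_const (hX0.product hY0), expect_dens_fiber hX hY] at markov
    linarith
  · have hd : dens G X Y ≤ η := h.resolve_left fun h => by rw [DomOne] at hdom; linarith
    have markov := mul_prob_le_expect (s := X ×ˢ Y) (c := 1 / 2)
      (F := fun e => dens G (fiber g (g e.1)) (fiber g (g e.2)))
      (p := fun e => ¬ (DomOne G (fiber g (g e.1)) (fiber g (g e.2)) ↔ DomOne G X Y))
      (fun e _ => dens_nonneg _ _)
      (fun e _ he => by rwa [iff_false_right hdom, not_not] at he)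
    rw [expect_dens_fiber hX hY] at markov
    linarith

end Mismatch

section Assembly

/-- `U` is a system of subsets, of size at least `m`, of the parts of `Q` as in the strong
regularity lemma. Irregular pairs are counted over ordered pairs of distinct indices,
hence twice. -/
structure IsRegularSystem {n q : ℕ} (G : SimpleGraph (Fin n)) (γ δ m : ℝ)
    (Q U : Fin q → Finset (Fin n)) : Prop where
  subset i : U i ⊆ Q i
  card_irregular_le : (#{p ∈ univ.offDiag | ¬ (HomPair G δ (Q p.1) (Q p.2) ∧
    (DomOne G (U p.1) (U p.2) ↔ DomOne G (Q p.1) (Q p.2)))} : ℝ) ≤ δ * q ^ 2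
  homPair {i j} (hij : i ≠ j) : HomPair G γ (U i) (U j)
  le_card i : m ≤ #(U i)

variable {n q : ℕ} {G : SimpleGraph (Fin n)} {g : Fin n → Fin q} {L : Type*} {h : Fin n → L}
  {ε γ δ : ℝ}

lemma IsClustering.prob_bad_le [Fintype L] [Nonempty (Fin n)] (hh : IsClustering G.Adj h ε)
    (hγ0 : 0 < γ) (hγ : γ ≤ 1 / 2) (hε : ε ≤ γ / (384 * q ^ 4)) (hq : 0 < q)
    (hsize : ∀ i, (n : ℝ) ≤ 2 * q * #(fiber g i)) (hne : ∀ i, (fiber g i).Nonempty)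
    (i j : Fin q) :
    prob (fiber g i ×ˢ fiber g j) (fun e =>
        ¬ HomPair G γ (fiber h (h e.1)) (fiber h (h e.2)) ∨
          (#(fiber h (h e.1)) : ℝ) < n / (16 * q ^ 3 * Fintype.card L)) ≤ 1 / (4 * q ^ 2) := by
  have : (0 : ℝ) < q := Nat.cast_pos.2 hq
  have hn0 : (0 : ℝ) < n := Nat.cast_pos.2 (Fin.pos_iff_nonempty.2 ‹_›)
  have hL0 : (0 : ℝ) < Fintype.card L :=
    Nat.cast_pos.2 (Fintype.card_pos_iff.2 (Nonempty.map h inferInstance))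
  have inhomogeneous : prob (fiber g i ×ˢ fiber g j) (fun e =>
      ¬ HomPair G γ (fiber h (h e.1)) (fiber h (h e.2))) ≤ 1 / (8 * (q : ℝ) ^ 2) := by
    refine (prob_fiber_product_le (c := 2 * q) (by simpa using hsize i) (by simpa using hsize j)
      ((hne i).product (hne j)) _).trans ?_
    calc (2 * q : ℝ) ^ 2 * prob univ (fun e : Fin n × Fin n =>
          ¬ HomPair G γ (fiber h (h e.1)) (fiber h (h e.2)))
        ≤ (2 * q) ^ 2 * (12 * (γ / (384 * q ^ 4)) / γ) := by
          gcongr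
          exact (hh.prob_not_homPair_le hγ0 hγ).trans (by gcongr)
      _ = 1 / (8 * (q : ℝ) ^ 2) := by field_simp; norm_num
  have small : prob (fiber g i ×ˢ fiber g j) (fun e =>
      (#(fiber h (h e.1)) : ℝ) < n / (16 * q ^ 3 * Fintype.card L)) ≤ 1 / (8 * (q : ℝ) ^ 2) := by
    rw [prob_product]
    simp only [prob_const (hne j)]
    rw [← prob_eq_expect_ite]
    refine (prob_card_fiber_lt_le h _ (by positivity)).trans ?_
    have hi : (n : ℝ) / (2 * q) ≤ #(fiber g i) := by
      rw [div_le_iff₀ (by positivity), mul_comm]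
      exact hsize i
    calc (Fintype.card L : ℝ) * (n / (16 * q ^ 3 * Fintype.card L) / #(fiber g i))
        ≤ Fintype.card L * (n / (16 * q ^ 3 * Fintype.card L) / (n / (2 * q))) := by gcongr
      _ = 1 / (8 * (q : ℝ) ^ 2) := by field_simp; norm_num
  refine (prob_or_le _ _ _).trans ((add_le_add inhomogeneous small).trans_eq ?_)
  field_simp
  norm_num

lemma IsClustering.card_not_homPair_le [Nonempty (Fin n)] (hg : IsClustering G.Adj g ε)
    (hδ0 : 0 < δ) (hδ : δ ≤ 1 / 2) (hsize : ∀ i, (n : ℝ) ≤ 2 * q * #(fiber g i)) :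
    (#{p : Fin q × Fin q | ¬ HomPair G δ (fiber g p.1) (fiber g p.2)} : ℝ)
      ≤ 48 * ε / δ * q ^ 2 := by
  calc (#{p : Fin q × Fin q | ¬ HomPair G δ (fiber g p.1) (fiber g p.2)} : ℝ)
      ≤ (2 * q) ^ 2 * prob univ fun e : Fin n × Fin n =>
          ¬ HomPair G δ (fiber g (g e.1)) (fiber g (g e.2)) :=
        card_pairs_le (g := g) (by simpa using hsize)
          fun i j => ¬ HomPair G δ (fiber g i) (fiber g j)
    _ ≤ (2 * q) ^ 2 * (12 * ε / δ) := by
        gcongr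
        exact hg.prob_not_homPair_le hδ0 hδ
    _ = 48 * ε / δ * q ^ 2 := by ring

lemma prob_homPair_and_domOne_fiber_ne_le (hδ0 : 0 ≤ δ) (hδ : δ < 1 / 2)
    (hne : ∀ i, (fiber g i).Nonempty) (hgh : ∀ u v, h u = h v → g u = g v) (i j : Fin q) :
    prob (fiber g i ×ˢ fiber g j) (fun e => HomPair G δ (fiber g i) (fiber g j) ∧
      ¬ (DomOne G (fiber h (h e.1)) (fiber h (h e.2)) ↔ DomOne G (fiber g i) (fiber g j)))
      ≤ 2 * δ := by
  have saturated (i : Fin q) : ∀ u ∈ fiber g i, ∀ v, h u = h v → v ∈ fiber g i :=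
    fun u hu v huv => mem_fiber.2 ((hgh u v huv).symm.trans (mem_fiber.1 hu))
  by_cases hij : HomPair G δ (fiber g i) (fiber g j)
  · simp only [hij, true_and]
    exact hij.prob_domOne_fiber_ne_le hδ (hne i) (hne j) (saturated i) (saturated j)
  · simp only [hij, false_and, prob, if_false, expect_const_zero]
    positivity

lemma IsClustering.card_irregular_le [Nonempty (Fin n)] (hg : IsClustering G.Adj g ε)
    (hδ0 : 0 < δ) (hδ : δ < 1 / 2) (hε : ε ≤ δ ^ 2 / 768)
    (hsize : ∀ i, (n : ℝ) ≤ 2 * q * #(fiber g i)) {U : Fin q → Finset (Fin n)}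
    (hU : (#{p ∈ univ.offDiag | HomPair G (δ / 8) (fiber g p.1) (fiber g p.2) ∧
      ¬ (DomOne G (U p.1) (U p.2) ↔ DomOne G (fiber g p.1) (fiber g p.2))} : ℝ)
        ≤ 2 * (2 * (δ / 8)) * q ^ 2) :
    (#{p ∈ univ.offDiag | ¬ (HomPair G δ (fiber g p.1) (fiber g p.2) ∧
      (DomOne G (U p.1) (U p.2) ↔ DomOne G (fiber g p.1) (fiber g p.2)))} : ℝ)
        ≤ δ * q ^ 2 := by
  have coarse := hg.card_not_homPair_le (δ := δ / 8) (by linarith) (by linarith) hsize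
  calc _ ≤ (#{p : Fin q × Fin q | ¬ HomPair G (δ / 8) (fiber g p.1) (fiber g p.2)} : ℝ)
        + #{p ∈ univ.offDiag | HomPair G (δ / 8) (fiber g p.1) (fiber g p.2) ∧
          ¬ (DomOne G (U p.1) (U p.2) ↔ DomOne G (fiber g p.1) (fiber g p.2))} := by
        rw [← Nat.cast_add, Nat.cast_le]
        refine (card_le_card fun p hp => ?_).trans (card_union_le _ _)
        have weaken (h : HomPair G (δ / 8) (fiber g p.1) (fiber g p.2)) :
            HomPair G δ (fiber g p.1) (fiber g p.2) := h.mono (by linarith)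
        rw [mem_filter] at hp
        rw [mem_union, mem_filter_univ, mem_filter, or_iff_not_imp_left, not_not]
        exact fun h => ⟨hp.1, h, fun hdom => hp.2 ⟨weaken h, hdom⟩⟩
    _ ≤ 48 * ε / (δ / 8) * q ^ 2 + 2 * (2 * (δ / 8)) * q ^ 2 := add_le_add coarse hU
    _ ≤ 48 * (δ ^ 2 / 768) / (δ / 8) * q ^ 2 + 2 * (2 * (δ / 8)) * q ^ 2 := by gcongr
    _ = δ * q ^ 2 := by field_simp; ring

lemma exists_isRegularSystem_fiber [Fintype L] [Nonempty (Fin n)] {ε' : ℝ}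
    (hg : IsClustering G.Adj g ε) (hh : IsClustering G.Adj h ε')
    (hgh : ∀ u v, h u = h v → g u = g v)
    (hδ0 : 0 < δ) (hδ : δ < 1 / 2) (hγ0 : 0 < γ) (hγ : γ < 1 / 2) (hε : ε ≤ δ ^ 2 / 768)
    (hε' : ε' ≤ γ / (384 * q ^ 4)) (hq : 2 ≤ q)
    (hsize : ∀ i, (n : ℝ) ≤ 2 * q * #(fiber g i)) :
    ∃ U : Fin q → Finset (Fin n),
      IsRegularSystem G γ δ (n / (16 * q ^ 3 * Fintype.card L)) (fiber g) U := by
  have : (0 : ℝ) < q := Nat.cast_pos.2 (by lia)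
  have : Nontrivial (Fin q) := Fin.nontrivial_iff_two_le.2 hq
  have hne (i : Fin q) : (fiber g i).Nonempty := by
    have hn0 : (0 : ℝ) < n := Nat.cast_pos.2 (Fin.pos_iff_nonempty.2 ‹_›)
    rw [← card_pos, ← Nat.cast_pos (α := ℝ)]
    exact pos_of_mul_pos_right (hn0.trans_le (hsize i)) (by positivity)
  obtain ⟨w, hw, hgood, hmis⟩ := exists_transversal hne
    (P := fun _ _ u v => ¬ HomPair G γ (fiber h (h u)) (fiber h (h v)) ∨
      (#(fiber h (h u)) : ℝ) < n / (16 * q ^ 3 * Fintype.card L))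
    (P' := fun i j u v => HomPair G (δ / 8) (fiber g i) (fiber g j) ∧
      ¬ (DomOne G (fiber h (h u)) (fiber h (h v)) ↔ DomOne G (fiber g i) (fiber g j)))
    (fun i j _ => hh.prob_bad_le hγ0 hγ.le hε' (by lia) hsize hne i j)
    (fun i j _ => prob_homPair_and_domOne_fiber_ne_le (by positivity) (by linarith) hne hgh i j)
    (by positivity) (by rw [Fintype.card_fin]; field_simp; norm_num) (by positivity)
  simp only [not_or, not_not, not_lt] at hgood
  rw [Fintype.card_fin] at hmis
  refine ⟨fun i => fiber h (h (w i)), fun i v hv => ?_, ?_,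
    fun {i j} hij => (hgood i j hij).1, fun i => ?_⟩
  · rw [mem_fiber, hgh v (w i) (mem_fiber.1 hv)]
    exact mem_fiber.1 (hw i)
  · exact hg.card_irregular_le (U := fun i => fiber h (h (w i))) hδ0 hδ hε hsize hmis
  · obtain ⟨j, hj⟩ := exists_ne i
    exact (hgood i j hj.symm).2

end Assembly

section Parameters

lemma exists_coarse_cluster_count {x : ℝ} (hx : 2 ≤ x) :
    ∃ N : ℕ, 2 ≤ N ∧ x ≤ N ∧ 1536 * x ^ 2 ≤ N ∧ (N : ℝ) ≤ x ^ 14 := by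
  have hlarge : x ≤ 1536 * x ^ 2 := by nlinarith
  have hceil := Nat.le_ceil (1536 * x ^ 2)
  refine ⟨⌈1536 * x ^ 2⌉₊, ?_, hlarge.trans hceil, hceil, ?_⟩
  · exact_mod_cast (hx.trans hlarge).trans hceil
  calc (⌈1536 * x ^ 2⌉₊ : ℝ) ≤ 2 * (1536 * x ^ 2) := Nat.ceil_le_two_mul (by linarith)
    _ ≤ 2 ^ 12 * x ^ 2 := by linarith [sq_nonneg x]
    _ ≤ x ^ 12 * x ^ 2 := by gcongr
    _ = x ^ 14 := by ring

lemma exists_fine_cluster_count {y z q : ℝ} {m : ℕ} (hy : 4 ≤ y) (hz : 1 ≤ z) (hzy : z ≤ y)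
    (hq : 1 ≤ q) (hqy : q ≤ y ^ m) :
    ∃ N : ℕ, q ≤ N ∧ 384 * q ^ 4 * z ≤ N ∧ (N : ℝ) ≤ y ^ (6 + m * 4) := by
  have hlarge : q ≤ 384 * q ^ 4 * z :=
    calc q ≤ q ^ 4 := le_self_pow₀ hq (by norm_num)
      _ ≤ 384 * q ^ 4 * z := by nlinarith [pow_pos (zero_lt_one.trans_le hq) 4]
  have hceil := Nat.le_ceil (384 * q ^ 4 * z)
  refine ⟨⌈384 * q ^ 4 * z⌉₊, hlarge.trans hceil, hceil, ?_⟩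
  calc (⌈384 * q ^ 4 * z⌉₊ : ℝ) ≤ 2 * (384 * q ^ 4 * z) := Nat.ceil_le_two_mul (by linarith)
    _ = 768 * z * q ^ 4 := by ring
    _ ≤ 4 ^ 5 * y * (y ^ m) ^ 4 := by gcongr; norm_num
    _ ≤ y ^ 5 * y * (y ^ m) ^ 4 := by gcongr
    _ = y ^ (6 + m * 4) := by rw [← pow_succ, ← pow_mul, ← pow_add]

lemma exists_cluster_counts (c : ℕ) : ∃ C : ℕ, 0 < C ∧ ∀ γ δ : ℝ, 0 < γ → γ < 1 / 2 → 0 < δ →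
    δ < 1 / 2 → ∃ N₁ N₂ : ℕ, 2 ≤ N₁ ∧ N₁ ≤ N₂ ∧
      1 / (N₁ : ℝ) ≤ δ ^ 2 / 1536 ∧ 1 / (N₂ : ℝ) ≤ γ / (384 * ((N₁ : ℝ) ^ (c + 1)) ^ 4) ∧
      δ⁻¹ ≤ (N₁ : ℝ) ^ (c + 1) ∧ (N₁ : ℝ) ^ (c + 1) ≤ δ⁻¹ ^ C ∧
      (γ * δ) ^ C ≤ ((N₂ : ℝ) ^ (c + 1))⁻¹ := by
  refine ⟨(6 + 14 * (c + 1) * 4) * (c + 1), by positivity, fun γ δ hγ0 hγ hδ0 hδ => ?_⟩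
  have hδinv : 2 ≤ δ⁻¹ := by rw [le_inv_comm₀ two_pos hδ0]; linarith
  have hγinv : 2 ≤ γ⁻¹ := by rw [le_inv_comm₀ two_pos hγ0]; linarith
  have hδy : δ⁻¹ ≤ γ⁻¹ * δ⁻¹ := by nlinarith
  obtain ⟨N₁, htwo, hδN₁, hcoarse, hN₁⟩ := exists_coarse_cluster_count hδinv
  have hN₁1 : (1 : ℝ) ≤ N₁ := by linarith
  have hself : (N₁ : ℝ) ≤ N₁ ^ (c + 1) := le_self_pow₀ hN₁1 c.succ_ne_zero
  have hq : (N₁ : ℝ) ^ (c + 1) ≤ δ⁻¹ ^ (14 * (c + 1)) :=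
    (pow_le_pow_left₀ (by positivity) hN₁ _).trans_eq (pow_mul _ _ _).symm
  obtain ⟨N₂, hqN₂, hfine, hN₂⟩ := exists_fine_cluster_count (y := γ⁻¹ * δ⁻¹) (z := γ⁻¹)
    (by nlinarith) (by linarith) (by nlinarith) (hN₁1.trans hself)
    (hq.trans (pow_le_pow_left₀ (by positivity) hδy _))
  have hN₂0 : (0 : ℝ) < N₂ := by linarith
  refine ⟨N₁, N₂, htwo, by exact_mod_cast hself.trans hqN₂, ?_, ?_, hδN₁.trans hself,
    hq.trans (pow_le_pow_right₀ (by linarith) ?_), ?_⟩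
  · rw [one_div_le (by positivity) (by positivity), one_div_div]
    exact hcoarse.trans_eq' (by ring)
  · rw [one_div_le (by positivity) (by positivity), one_div_div]
    exact hfine.trans_eq' (by ring)
  · exact (Nat.le_mul_of_pos_right _ c.succ_pos).trans' (by lia)
  · rw [le_inv_comm₀ (by positivity) (by positivity), ← inv_pow, mul_inv, pow_mul]
    exact pow_le_pow_left₀ hN₂0.le hN₂ _

end Parameters

section StrongPartition

lemma isEquipartition_fiber {n q m : ℕ} {g : Fin n → Fin q}
    (hg : ∀ i, #(fiber g i) = m ∨ #(fiber g i) = m + 1) : IsEquipartition (fiber g) := by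
  refine ⟨fun i j hij => disjoint_left.2 fun v hi hj => hij ?_, fun v => ⟨g v, mem_fiber.2 rfl⟩,
    fun i j => ?_⟩
  · exact (mem_fiber.1 hi).symm.trans (mem_fiber.1 hj)
  · have := hg i
    have := hg j
    lia

variable {n q : ℕ} {G : SimpleGraph (Fin n)} {γ δ m : ℝ} {Q U : Fin q → Finset (Fin n)}

lemma IsRegularSystem.mono {m' : ℝ} (hU : IsRegularSystem G γ δ m Q U) (hm : m' ≤ m) :
    IsRegularSystem G γ δ m' Q U :=
  ⟨hU.subset, hU.card_irregular_le, hU.homPair, fun i => hm.trans (hU.le_card i)⟩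

lemma IsRegularSystem.ncard_irregular_le (hU : IsRegularSystem G γ δ m Q U) :
    (Set.ncard {ij : Fin q × Fin q | ij.1 < ij.2 ∧ ¬ (HomPair G δ (Q ij.1) (Q ij.2) ∧
      (DomOne G (U ij.1) (U ij.2) ↔ DomOne G (Q ij.1) (Q ij.2)))} : ℝ) ≤ δ * q ^ 2 := by
  refine le_trans ?_ hU.card_irregular_le
  rw [← Set.ncard_coe_finset, Nat.cast_le]
  refine Set.ncard_le_ncard (fun p hp => ?_) (finite_toSet _)
  exact mem_filter.2 ⟨mem_offDiag.2 ⟨mem_univ _, mem_univ _, hp.1.ne⟩, hp.2⟩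

lemma exists_isRegularSystem {s t : ℕ} {ε ε' : ℝ} {f₁ : Fin n → Fin s} {f₂ : Fin n → Fin t}
    (hf₁ : IsClustering G.Adj f₁ ε) (hf₂ : IsClustering G.Adj f₂ ε') (hδ0 : 0 < δ)
    (hδ : δ < 1 / 2) (hγ0 : 0 < γ) (hγ : γ < 1 / 2) (hε : ε ≤ δ ^ 2 / 1536)
    (hε' : ε' ≤ γ / (384 * q ^ 4)) (hq : 2 ≤ q) (hqn : q ≤ n) (hs : s ≤ ε * q) :
    ∃ Q U : Fin q → Finset (Fin n), IsEquipartition Q ∧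
      IsRegularSystem G γ δ (n / (16 * q ^ 4 * t)) Q U := by
  have : Nonempty (Fin n) := Fin.pos_iff_nonempty.1 (by lia)
  obtain ⟨g, hsize, hg⟩ := hf₁.exists_equitable (by lia) (by simpa using hqn) hs
  simp only [Fintype.card_fin] at hsize
  have hh : IsClustering G.Adj (fun v => (g v, f₂ v)) ε' :=
    hf₂.of_comp le_rfl fun u v huv => (Prod.ext_iff.1 huv).2
  have hlarge (i : Fin q) : (n : ℝ) ≤ 2 * q * #(fiber g i) := by
    have hdiv : 1 ≤ n / q := (Nat.one_le_div_iff (by lia)).2 hqn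
    have hnat : n ≤ 2 * q * #(fiber g i) :=
      calc n ≤ q * (n / q + 1) := (Nat.lt_mul_div_succ n (by lia)).le
        _ ≤ q * (2 * #(fiber g i)) := by gcongr; have := hsize i; lia
        _ = 2 * q * #(fiber g i) := by ring
    exact_mod_cast hnat
  obtain ⟨U, hU⟩ := exists_isRegularSystem_fiber hg hh (fun u v huv => (Prod.ext_iff.1 huv).1)
    hδ0 hδ hγ0 hγ (by linarith) hε' hq hlarge
  refine ⟨fiber g, U, isEquipartition_fiber hsize, hU.mono (le_of_eq ?_)⟩
  rw [Fintype.card_prod, Fintype.card_fin, Fintype.card_fin]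
  push_cast
  ring_nf

lemma exists_isRegularSystem_or_copies (k : ℕ) : ∃ c : ℕ, ∀ N₁ N₂ : ℕ, 2 ≤ N₁ → N₁ ≤ N₂ →
    ∃ n₀ : ℕ, ∀ n : ℕ, n₀ ≤ n → ∀ (B : Fin k → Fin k → Prop) (G : SimpleGraph (Fin n)) (γ δ : ℝ),
      0 < γ → γ < 1 / 2 → 0 < δ → δ < 1 / 2 → 1 / (N₁ : ℝ) ≤ δ ^ 2 / 1536 →
      1 / (N₂ : ℝ) ≤ γ / (384 * ((N₁ : ℝ) ^ (c + 1)) ^ 4) →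
      (n : ℝ) ^ (2 * k) / (N₂ : ℝ) ^ (c + 1) ≤ bipCopyCount B G ∨
      ∃ Q U : Fin (N₁ ^ (c + 1)) → Finset (Fin n), IsEquipartition Q ∧
        IsRegularSystem G γ δ (n / (N₂ : ℝ) ^ (c + 1)) Q U := by
  obtain ⟨c, hc⟩ := exists_isClustering_or_copies k
  refine ⟨c, fun N₁ N₂ hN₁ hN₁₂ => ?_⟩
  obtain ⟨n₁, hn₁⟩ := hc N₁ hN₁
  obtain ⟨n₂, hn₂⟩ := hc N₂ (hN₁.trans hN₁₂)
  refine ⟨max (max n₁ n₂) (N₁ ^ (c + 1)), fun n hn B G γ δ hγ0 hγ hδ0 hδ hcoarse hfine => ?_⟩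
  simp only [max_le_iff] at hn
  have hN₁0 : (0 : ℝ) < N₁ := Nat.cast_pos.2 (by lia)
  have hN₂1 : (1 : ℝ) ≤ N₂ := Nat.one_le_cast.2 (by lia)
  have hpow : (N₂ : ℝ) ^ c ≤ N₂ ^ (c + 1) := pow_le_pow_right₀ hN₂1 c.le_succ
  obtain hcopies | ⟨f₁, hf₁⟩ := hn₁ n hn.1.1 B G
  · refine .inl (hcopies.trans' ?_)
    gcongr
    exact hpow.trans' (by gcongr)
  obtain hcopies | ⟨f₂, hf₂⟩ := hn₂ n hn.1.2 B G
  · exact .inl (hcopies.trans' (by gcongr))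
  have hlabels : ((N₁ ^ c : ℕ) : ℝ) ≤ 1 / N₁ * (N₁ ^ (c + 1) : ℕ) := by
    push_cast
    rw [pow_succ, one_div, inv_mul_eq_div, mul_div_cancel_right₀ _ hN₁0.ne']
  obtain ⟨Q, U, hQ, hU⟩ := exists_isRegularSystem (q := N₁ ^ (c + 1)) hf₁ hf₂ hδ0 hδ hγ0 hγ
    hcoarse (by exact_mod_cast hfine) (hN₁.trans (Nat.le_self_pow c.succ_ne_zero N₁)) hn.2 hlabels
  refine .inr ⟨Q, U, hQ, hU.mono ?_⟩
  have hcoef : 16 * ((N₁ : ℝ) ^ (c + 1)) ^ 4 ≤ N₂ := by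
    rw [div_le_div_iff₀ (by positivity) (by positivity)] at hfine
    nlinarith [pow_pos (pow_pos hN₁0 (c + 1)) 4]
  push_cast
  gcongr
  exact (mul_le_mul_of_nonneg_right hcoef (by positivity)).trans_eq (pow_succ' _ _).symm

end StrongPartition

/-- Lemma 2.5 of the paper. -/
theorem strong_regularity (k : ℕ) (hk : 1 ≤ k) :
    ∃ C : ℝ, 0 < C ∧
      ∀ B : Fin k → Fin k → Prop, ∀ γ δ : ℝ, 0 < γ → γ < 1 / 2 → 0 < δ → δ < 1 / 2 →
        ∃ n₀ : ℕ, ∀ n : ℕ, n₀ ≤ n → ∀ G : SimpleGraph (Fin n),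
          (γ * δ) ^ C * (n : ℝ) ^ (2 * k) ≤ (bipCopyCount B G : ℝ) ∨
          ∃ q : ℕ, δ⁻¹ ≤ (q : ℝ) ∧ (q : ℝ) ≤ δ ^ (-C) ∧
            ∃ Q : Fin q → Finset (Fin n), IsEquipartition Q ∧
            ∃ U : Fin q → Finset (Fin n), (∀ i, U i ⊆ Q i) ∧
              ((Set.ncard {ij : Fin q × Fin q | ij.1 < ij.2 ∧
                ¬ (HomPair G δ (Q ij.1) (Q ij.2) ∧
                    (DomOne G (U ij.1) (U ij.2) ↔ DomOne G (Q ij.1) (Q ij.2)))} : ℝ)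
                  ≤ δ * (q : ℝ) ^ 2) ∧
              (∀ i j : Fin q, i < j → HomPair G γ (U i) (U j)) ∧
              (∀ i : Fin q, (γ * δ) ^ C * (n : ℝ) ≤ ((U i).card : ℝ)) := by
  obtain ⟨c, hsystem⟩ := exists_isRegularSystem_or_copies k
  obtain ⟨C, hC, hcounts⟩ := exists_cluster_counts c
  refine ⟨C, Nat.cast_pos.2 hC, fun B γ δ hγ0 hγ hδ0 hδ => ?_⟩
  obtain ⟨N₁, N₂, hN₁, hN₁₂, hcoarse, hfine, hδq, hqδ, hN₂⟩ := hcounts γ δ hγ0 hγ hδ0 hδ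
  obtain ⟨n₀, hn₀⟩ := hsystem N₁ N₂ hN₁ hN₁₂
  refine ⟨n₀, fun n hn G => ?_⟩
  have hrate (a : ℝ) (ha : 0 ≤ a) : (γ * δ) ^ (C : ℝ) * a ≤ a / (N₂ : ℝ) ^ (c + 1) := by
    rw [Real.rpow_natCast, div_eq_inv_mul]
    gcongr
  obtain hcopies | ⟨Q, U, hQ, hU⟩ := hn₀ n hn B G γ δ hγ0 hγ hδ0 hδ hcoarse hfine
  · exact .inl ((hrate _ (by positivity)).trans hcopies)
  · refine .inr ⟨N₁ ^ (c + 1), by exact_mod_cast hδq, ?_, Q, hQ, U, hU.subset,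
      hU.ncard_irregular_le, fun i j hij => hU.homPair hij.ne,
      fun i => (hrate n n.cast_nonneg).trans (hU.le_card i)⟩
    rw [Real.rpow_neg hδ0.le, Real.rpow_natCast, ← inv_pow]
    exact_mod_cast hqδ

end
end
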